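/- There exist absolute constants c > 0 and C > 0 such that for every odd prime p and every A ⊆ F_p with |A| ≥ 2, at least one of the following holds: |A+A| ≥ (1/5)·min{|A|^{6/5}, p/2}, or |A·A| ≥ c·min{p·|A|^{−2/5}, |A|^{6/5}}·(log|A|)^{−C}. -/

import Mathlib

open Finset

/-- The sumset `A + A = {a + a' : a, a' ∈ A}`. -/
def sumSet (p : ℕ) (A : Finset (ZMod p)) : Finset (ZMod p) :=
  (A ×ˢ A).image fun x => x.1 + x.2

/-- The product set `A·A = {a·a' : a, a' ∈ A}`. -/
def prodSet (p : ℕ) (A : Finset (ZMod p)) : Finset (ZMod p) :=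
  (A ×ˢ A).image fun x => x.1 * x.2

/-!
Suppose `0 ∉ A`. A quadruple `b x' = b' x` in `A` together with `e, e' ∈ A` gives a point common to
two lines of `K³`: one from a family of lines parallel to the `xz`-plane, parametrised by
`(A + A) × A × A`, and one from the analogous family parallel to the `yz`-plane. So the
multiplicative energy of `A`, which is at least `|A|⁴ / |A·A|` by Cauchy–Schwarz, is controlled by
the number of incidences between two families of at most `N = |A|² |A + A|` lines.

The incidences are bounded by the polynomial method. A surface `F = 0` of degree `D ≈ √N` contains
all lines of the second family; a line of the first family not on the surface meets it in at most
`D` points. Of the lines on the surface, Bézout's theorem leaves only `O(D²)` as long as a component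
does not divide its bordered Hessian. If it does divide it and `D` is below the characteristic, the
component is ruled, and all lines of the second family on it meet two fixed lines, so that there are
at most `|A + A|` of them. Halving the second family and iterating costs the factor `log |A|`.

For `N` larger than about `p²`, where the degree restriction fails, both families are split into
pieces of size about `p²`. The pairwise skewness of the lines needed above holds after passing from
`k` to the extension `k(X)`.
-/

/-! ### Polynomials in several variables -/

section Polynomials

open MvPolynomial

variable {σ R : Type*}

/-- The ring `R` has characteristic zero or at least `p`. -/
def CharAtLeast (R : Type*) [Semiring R] (p : ℕ) : Prop :=
  ∀ m : ℕ, 0 < m → m < p → (m : R) ≠ 0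

theorem charAtLeast_of_charP (R : Type*) [Semiring R] (p : ℕ) [CharP R p] : CharAtLeast R p :=
  fun m hm hmp h => absurd (Nat.le_of_dvd hm ((CharP.cast_eq_zero_iff R p m).1 h)) (by lia)

theorem CharAtLeast.of_injective {S : Type*} [Semiring R] [Semiring S] {p : ℕ}
    (hp : CharAtLeast R p) {f : R →+* S} (hf : Function.Injective f) : CharAtLeast S p :=
  fun m hm hmp h => hp m hm hmp (hf (by rw [map_natCast, h, map_zero]))

theorem card_finsupp_degree_le [Fintype σ] (N : ℕ) :
    Nat.card {n : σ →₀ ℕ | (n.sum fun _ e => e) ≤ N} = (Fintype.card σ + N).choose N := by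
  classical
  have hunion : {n : σ →₀ ℕ | (n.sum fun _ e => e) ≤ N} =
      ↑((range (N + 1)).biUnion fun i => (univ : Finset σ).finsuppAntidiag i) := by
    ext n
    simp [mem_finsuppAntidiag, Finsupp.sum_fintype]
  have hdisj : (range (N + 1) : Set ℕ).PairwiseDisjoint
      fun i => (univ : Finset σ).finsuppAntidiag i := by
    intro i _ j _ hij
    refine disjoint_left.2 fun n hi hj => hij ?_
    rw [mem_finsuppAntidiag] at hi hj
    exact hi.1.symm.trans hj.1
  rw [hunion, Nat.card_coe_set_eq, Set.ncard_coe_finset, card_biUnion hdisj]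
  simp only [card_finsuppAntidiag_nat_eq_choose, card_univ]
  clear hunion hdisj
  induction N with
  | zero => simp
  | succ N ih =>
    rw [sum_range_succ, ih, ← add_assoc, Nat.choose_succ_succ]
    rfl

theorem finrank_restrictTotalDegree (σ R : Type*) [Fintype σ] [CommRing R] [Nontrivial R] (N : ℕ) :
    Module.finrank R (restrictTotalDegree σ R N) = (Fintype.card σ + N).choose N := by
  rw [← card_finsupp_degree_le]
  exact Module.finrank_eq_nat_card_basis (basisRestrictSupport R _)

theorem six_mul_finrank_restrictTotalDegree (R : Type*) [CommRing R] [Nontrivial R] (N : ℕ) :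
    6 * Module.finrank R (restrictTotalDegree (Fin 3) R N) = (N + 1) * (N + 2) * (N + 3) := by
  have h := Nat.ascFactorial_eq_factorial_mul_choose N 3
  rw [finrank_restrictTotalDegree, Fintype.card_fin, add_comm 3 N, Nat.choose_symm_add]
  simp only [Nat.ascFactorial, Nat.factorial] at h
  linarith

variable [CommRing R]

theorem totalDegree_pderiv_add_one_le {i : σ} {F : MvPolynomial σ R} (h : pderiv i F ≠ 0) :
    (pderiv i F).totalDegree + 1 ≤ F.totalDegree := by
  have hsupp : ∀ m ∈ (pderiv i F).support, (m.sum fun _ e => e) + 1 ≤ F.totalDegree := by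
    intro m hm
    rw [mem_support_iff, coeff_pderiv] at hm
    have hle := le_totalDegree (mem_support_iff.2 (left_ne_zero_of_mul hm))
    rwa [Finsupp.sum_add_index' (by simp) (by simp), Finsupp.sum_single_index rfl] at hle
  obtain ⟨m, hm⟩ := nonempty_of_ne_empty (mt support_eq_empty.1 h)
  have hsup : (pderiv i F).totalDegree ≤ F.totalDegree - 1 :=
    Finset.sup_le fun m hm => Nat.le_sub_one_of_lt (hsupp m hm)
  have := hsupp m hm
  lia

theorem totalDegree_pderiv_le (i : σ) (F : MvPolynomial σ R) :
    (pderiv i F).totalDegree ≤ F.totalDegree := by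
  by_cases h : pderiv i F = 0
  · simp [h]
  · exact (Nat.le_succ _).trans (totalDegree_pderiv_add_one_le h)

theorem notMem_vars_of_pderiv_eq_zero [IsDomain R] {p : ℕ} (hp : CharAtLeast R p) {i : σ}
    {F : MvPolynomial σ R} (hd : F.totalDegree < p) (h : pderiv i F = 0) : i ∉ F.vars := by
  classical
  rw [mem_vars_iff_mem_support]
  rintro ⟨s, hs, hi⟩
  have hsi : 0 < s i := Nat.pos_of_ne_zero (Finsupp.mem_support_iff.1 hi)
  have hsd : s i ≤ F.totalDegree :=
    (single_le_sum (f := s) (fun _ _ => Nat.zero_le _) hi).trans (le_totalDegree hs)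
  have hcoeff := coeff_pderiv (i := i) F (s - Finsupp.single i 1)
  rw [h, coeff_zero, tsub_add_cancel_of_le (Finsupp.single_le_iff.2 hsi), Finsupp.tsub_apply,
    Finsupp.single_eq_same, ← Nat.cast_add_one, Nat.sub_add_cancel hsi] at hcoeff
  exact mul_ne_zero (mem_support_iff.1 hs) (hp _ hsi (hsd.trans_lt hd)) hcoeff.symm

theorem not_dvd_pderiv_of_ne_zero [IsDomain R] {i : σ} {F : MvPolynomial σ R}
    (h : pderiv i F ≠ 0) : ¬ F ∣ pderiv i F := by
  rintro ⟨c, hc⟩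
  have hlt := totalDegree_pderiv_add_one_le h
  rw [hc] at h
  rw [hc, totalDegree_mul_of_isDomain (left_ne_zero_of_mul h) (right_ne_zero_of_mul h)] at hlt
  lia

theorem derivation_aeval [Fintype σ] {S M : Type*} [CommRing S] [Algebra R S]
    [AddCommGroup M] [Module R M] [Module S M] (d : Derivation R S M) (g : σ → S)
    (F : MvPolynomial σ R) : d (aeval g F) = ∑ i, aeval g (pderiv i F) • d (g i) := by
  classical
  induction F using MvPolynomial.induction_on with
  | C a => simp
  | add p q hp hq => simp only [map_add, hp, hq, add_smul, sum_add_distrib]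
  | mul_X p i hp =>
    simp only [map_mul, aeval_X, Derivation.leibniz, smul_eq_mul, hp, map_add, add_smul,
      sum_add_distrib, smul_sum, pderiv_X, mul_smul]
    congr 1
    simp [Pi.single_apply, apply_ite (aeval g)]

theorem finrank_degreeLT (R : Type*) [CommRing R] [Nontrivial R] (n : ℕ) :
    Module.finrank R (Polynomial.degreeLT R n) = n := by
  rw [LinearEquiv.finrank_eq (Polynomial.degreeLTEquiv R n), Module.finrank_fin_fun]

theorem finite_degreeLT (R : Type*) [CommRing R] (n : ℕ) :
    Module.Finite R (Polynomial.degreeLT R n) :=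
  Module.Finite.equiv (Polynomial.degreeLTEquiv R n).symm

end Polynomials

/-! ### Two families of lines in three-space -/

/-- The parameters of a line in `K³`. They are read in two ways: as the *X-line*
`{(t, base, slope * t + intercept)}` and as the *Y-line* `{(base, t, slope * t + intercept)}`. -/
@[ext]
structure GraphLine (K : Type*) where
  base : K
  slope : K
  intercept : K
deriving DecidableEq

namespace GraphLine

variable {K : Type*}

section CommRing

variable [CommRing K]

/-- The third coordinate of the point of the line with parameter `t`. -/
def height (ℓ : GraphLine K) (t : K) : K :=
  ℓ.slope * t + ℓ.intercept

/-- The X-line `ℓ` meets the Y-line `m`. The only candidate for the common point has first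
coordinate `m.base` and second coordinate `ℓ.base`. -/
def Meets (ℓ m : GraphLine K) : Prop :=
  ℓ.height m.base = m.height ℓ.base

theorem meets_comm {ℓ m : GraphLine K} : ℓ.Meets m ↔ m.Meets ℓ :=
  eq_comm

instance [DecidableEq K] (ℓ m : GraphLine K) : Decidable (ℓ.Meets m) :=
  inferInstanceAs (Decidable (ℓ.height m.base = m.height ℓ.base))

/-- Distinct lines of the family, read as lines of the same class, have no common point. -/
def PairwiseSkew (P : Finset (GraphLine K)) : Prop :=
  ∀ t, Set.InjOn (fun ℓ : GraphLine K => (ℓ.base, ℓ.height t)) P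

theorem PairwiseSkew.mono {P P' : Finset (GraphLine K)} (hP : PairwiseSkew P) (h : P' ⊆ P) :
    PairwiseSkew P' :=
  fun t => (hP t).mono (coe_subset.2 h)

/-- The restriction of a polynomial function on `K³` to the X-line `ℓ`. -/
noncomputable def restrictX (ℓ : GraphLine K) : MvPolynomial (Fin 3) K →ₐ[K] Polynomial K :=
  MvPolynomial.aeval ![.X, .C ℓ.base, .C ℓ.slope * .X + .C ℓ.intercept]

/-- The restriction of a polynomial function on `K³` to the Y-line `m`. -/
noncomputable def restrictY (m : GraphLine K) : MvPolynomial (Fin 3) K →ₐ[K] Polynomial K :=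
  MvPolynomial.aeval ![.C m.base, .X, .C m.slope * .X + .C m.intercept]

theorem eval_restrictX (ℓ : GraphLine K) (F : MvPolynomial (Fin 3) K) (t : K) :
    (ℓ.restrictX F).eval t = MvPolynomial.eval ![t, ℓ.base, ℓ.height t] F := by
  have h : (Polynomial.aeval t).comp ℓ.restrictX = MvPolynomial.aeval ![t, ℓ.base, ℓ.height t] :=
    MvPolynomial.algHom_ext fun i => by fin_cases i <;> simp [restrictX, height]
  exact DFunLike.congr_fun h F

theorem eval_restrictY (m : GraphLine K) (F : MvPolynomial (Fin 3) K) (t : K) :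
    (m.restrictY F).eval t = MvPolynomial.eval ![m.base, t, m.height t] F := by
  have h : (Polynomial.aeval t).comp m.restrictY = MvPolynomial.aeval ![m.base, t, m.height t] :=
    MvPolynomial.algHom_ext fun i => by fin_cases i <;> simp [restrictY, height]
  exact DFunLike.congr_fun h F

theorem Meets.eval_restrictX_eq {ℓ m : GraphLine K} (h : ℓ.Meets m) (F : MvPolynomial (Fin 3) K) :
    (ℓ.restrictX F).eval m.base = (m.restrictY F).eval ℓ.base := by
  rw [eval_restrictX, eval_restrictY, h]

theorem natDegree_restrictX_le (ℓ : GraphLine K) (F : MvPolynomial (Fin 3) K) :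
    (ℓ.restrictX F).natDegree ≤ F.totalDegree := by
  rw [← mul_one F.totalDegree]
  refine MvPolynomial.aeval_natDegree_le F le_rfl _ fun i => ?_
  fin_cases i
  · exact Polynomial.natDegree_X_le
  · simp
  · exact Polynomial.natDegree_linear_le

theorem natDegree_restrictY_le (m : GraphLine K) (F : MvPolynomial (Fin 3) K) :
    (m.restrictY F).natDegree ≤ F.totalDegree := by
  rw [← mul_one F.totalDegree]
  refine MvPolynomial.aeval_natDegree_le F le_rfl _ fun i => ?_
  fin_cases i
  · simp
  · exact Polynomial.natDegree_X_le
  · exact Polynomial.natDegree_linear_le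

theorem derivative_restrictX (ℓ : GraphLine K) (F : MvPolynomial (Fin 3) K) :
    Polynomial.derivative (ℓ.restrictX F) =
      ℓ.restrictX (MvPolynomial.pderiv 0 F) +
        Polynomial.C ℓ.slope * ℓ.restrictX (MvPolynomial.pderiv 2 F) := by
  refine (derivation_aeval Polynomial.derivative' _ F).trans ?_
  simp only [Polynomial.derivative', Derivation.mk_coe, LinearMap.coe_mk, AddHom.coe_mk,
    smul_eq_mul, Fin.sum_univ_three, restrictX, Matrix.cons_val_zero, Matrix.cons_val_one,
    Matrix.cons_val, Polynomial.derivative_add, Polynomial.derivative_mul, Polynomial.derivative_X,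
    Polynomial.derivative_C]
  ring

theorem restrictX_aeval_X (ℓ : GraphLine K) (c : Polynomial K) :
    ℓ.restrictX (Polynomial.aeval (MvPolynomial.X 0) c) = c := by
  have h : ℓ.restrictX.comp (Polynomial.aeval (MvPolynomial.X 0)) = AlgHom.id K _ :=
    Polynomial.algHom_ext (by simp [restrictX])
  exact DFunLike.congr_fun h c

variable [IsDomain K] [DecidableEq K]

theorem card_filter_meets_and_root_le (ℓ : GraphLine K) {Q : Finset (GraphLine K)}
    (hQ : PairwiseSkew Q) {f : Polynomial K} (hf : f ≠ 0) :
    #{m ∈ Q | ℓ.Meets m ∧ f.eval m.base = 0} ≤ f.natDegree := by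
  have hinj : Set.InjOn base (SetLike.coe {m ∈ Q | ℓ.Meets m ∧ f.eval m.base = 0}) := by
    intro m hm m' hm' (hbase : m.base = m'.base)
    simp only [coe_filter, Set.mem_ofPred_eq] at hm hm'
    refine hQ ℓ.base hm.1 hm'.1 (Prod.ext hbase ?_)
    exact hm.2.1.symm.trans ((congrArg ℓ.height hbase).trans hm'.2.1)
  rw [← card_image_of_injOn hinj]
  refine Polynomial.card_le_degree_of_subset_roots (p := f) fun x hx => ?_
  obtain ⟨m, hm, rfl⟩ := mem_image.1 hx
  exact (Polynomial.mem_roots hf).2 (mem_filter.1 hm).2.2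

end CommRing

section Field

variable [Field K]

theorem exists_totalDegree_le_forall_restrictY_eq_zero {Q : Finset (GraphLine K)} {D : ℕ}
    (hD : 6 * #Q < (D + 2) * (D + 3)) :
    ∃ F : MvPolynomial (Fin 3) K, F ≠ 0 ∧ F.totalDegree ≤ D ∧ ∀ m ∈ Q, m.restrictY F = 0 := by
  have := finite_degreeLT K (D + 1)
  have hmem (m : GraphLine K) (F : MvPolynomial.restrictTotalDegree (Fin 3) K D) :
      m.restrictY F.1 ∈ Polynomial.degreeLT K (D + 1) := by
    have hF := (MvPolynomial.mem_restrictTotalDegree _ _ _).1 F.2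
    refine Polynomial.mem_degreeLT.2 (Polynomial.degree_le_natDegree.trans_lt ?_)
    exact_mod_cast Nat.lt_succ_of_le ((natDegree_restrictY_le m F.1).trans hF)
  let restrict : MvPolynomial.restrictTotalDegree (Fin 3) K D →ₗ[K]
      (Q → Polynomial.degreeLT K (D + 1)) :=
    LinearMap.pi fun m =>
      (m.1.restrictY.toLinearMap ∘ₗ Submodule.subtype _).codRestrict _ (hmem m.1)
  have hrank : Module.finrank K (Q → Polynomial.degreeLT K (D + 1)) <
      Module.finrank K (MvPolynomial.restrictTotalDegree (Fin 3) K D) := by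
    have := six_mul_finrank_restrictTotalDegree K D
    simp only [Module.finrank_pi_fintype, finrank_degreeLT, sum_const, card_univ,
      Fintype.card_coe, smul_eq_mul]
    nlinarith
  obtain ⟨F, hF, hF0⟩ := Submodule.exists_mem_ne_zero_of_ne_bot
    (LinearMap.ker_ne_bot_of_finrank_lt (f := restrict) hrank)
  refine ⟨F.1, by simpa using hF0, (MvPolynomial.mem_restrictTotalDegree _ _ _).1 F.2,
    fun m hm => ?_⟩
  exact congrArg Subtype.val (congrFun (LinearMap.mem_ker.1 hF) ⟨m, hm⟩)

end Field
end GraphLine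

/-! ### Bézout's bound for lines on two surfaces -/

section Bezout

open MvPolynomial

section Koszul

variable {σ K : Type*} [Field K]

theorem finrank_map_mulLeft {F : MvPolynomial σ K} (hF : F ≠ 0)
    (V : Submodule K (MvPolynomial σ K)) :
    Module.finrank K (V.map (LinearMap.mulLeft K F)) = Module.finrank K V :=
  (Submodule.equivMapOfInjective _ (mul_right_injective₀ hF) V).finrank_eq.symm

theorem map_mulLeft_restrictTotalDegree_le (F : MvPolynomial σ K) (N : ℕ) :
    (restrictTotalDegree σ K N).map (LinearMap.mulLeft K F) ≤
      restrictTotalDegree σ K (F.totalDegree + N) := by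
  rintro _ ⟨a, ha, rfl⟩
  have := (mem_restrictTotalDegree _ _ _).1 ha
  exact (mem_restrictTotalDegree _ _ _).2 ((totalDegree_mul _ _).trans (by gcongr))

theorem map_mulLeft_inf_map_mulLeft_le {F G : MvPolynomial σ K} (hF : Prime F) (hG : ¬ F ∣ G)
    (M : ℕ) :
    (restrictTotalDegree σ K (M + G.totalDegree)).map (LinearMap.mulLeft K F) ⊓
        (restrictTotalDegree σ K (M + F.totalDegree)).map (LinearMap.mulLeft K G) ≤
      (restrictTotalDegree σ K M).map (LinearMap.mulLeft K (F * G)) := by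
  rintro H ⟨⟨a, ha, rfl⟩, ⟨b, -, hab⟩⟩
  simp only [LinearMap.mulLeft_apply] at hab
  obtain ⟨c, rfl⟩ := (hF.dvd_or_dvd ⟨a, hab⟩).resolve_left hG
  obtain rfl : G * c = a := mul_left_cancel₀ hF.ne_zero (by linear_combination hab)
  refine ⟨c, (mem_restrictTotalDegree _ _ _).2 ?_, by simp⟩
  by_cases hc : c = 0
  · simp [hc]
  · have hG0 : G ≠ 0 := fun h => hG (h ▸ dvd_zero F)
    have hdeg := (mem_restrictTotalDegree _ _ _).1 ha
    rw [totalDegree_mul_of_isDomain hG0 hc] at hdeg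
    lia

theorem finrank_add_finrank_le_finrank_sup [Finite σ] {F G : MvPolynomial σ K} (hF : Prime F)
    (hG : ¬ F ∣ G) (M : ℕ) :
    Module.finrank K (restrictTotalDegree σ K (M + G.totalDegree)) +
        Module.finrank K (restrictTotalDegree σ K (M + F.totalDegree)) ≤
      Module.finrank K ↥((restrictTotalDegree σ K (M + G.totalDegree)).map (LinearMap.mulLeft K F) ⊔
          (restrictTotalDegree σ K (M + F.totalDegree)).map (LinearMap.mulLeft K G)) +
        Module.finrank K (restrictTotalDegree σ K M) := by
  have hG0 : G ≠ 0 := fun h => hG (h ▸ dvd_zero F)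
  rw [← finrank_map_mulLeft hF.ne_zero (restrictTotalDegree σ K (M + G.totalDegree)),
    ← finrank_map_mulLeft hG0 (restrictTotalDegree σ K (M + F.totalDegree)),
    ← finrank_map_mulLeft (mul_ne_zero hF.ne_zero hG0) (restrictTotalDegree σ K M),
    ← Submodule.finrank_sup_add_finrank_inf_eq]
  gcongr
  exact Submodule.finrank_mono (map_mulLeft_inf_map_mulLeft_le hF hG M)

end Koszul

theorem totalDegree_aeval_X_le {σ R : Type*} [CommSemiring R] [Nontrivial R] (i : σ)
    (c : Polynomial R) :
    (Polynomial.aeval (X i : MvPolynomial σ R) c).totalDegree ≤ c.natDegree := by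
  rw [Polynomial.aeval_eq_sum_range]
  refine totalDegree_finsetSum_le fun j hj => (totalDegree_smul_le _ _).trans ?_
  rw [totalDegree_X_pow]
  exact Nat.lt_succ_iff.1 (mem_range.1 hj)

namespace GraphLine

variable {K : Type*} [Field K]

theorem exists_totalDegree_le_one_restrictX_eq_zero {ℓ m : GraphLine K} (h : ℓ ≠ m) :
    ∃ E : MvPolynomial (Fin 3) K, E.totalDegree ≤ 1 ∧ ℓ.restrictX E ≠ 0 ∧ m.restrictX E = 0 := by
  by_cases hbase : ℓ.base = m.base
  · refine ⟨X 2 - C m.slope * X 0 - C m.intercept, ?_, fun h0 => h ?_, by simp [restrictX]⟩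
    · refine (totalDegree_sub_C_le _ _).trans ((totalDegree_sub _ _).trans (max_le ?_ ?_))
      · simp
      · exact (totalDegree_mul _ _).trans (by simp)
    · have hzero := congrArg (Polynomial.eval 0) h0
      have hone := congrArg (Polynomial.eval 1) h0
      rw [eval_restrictX, Polynomial.eval_zero] at hzero hone
      simp only [height, map_sub, map_mul, eval_X, eval_C, Matrix.cons_val_zero,
        Matrix.cons_val] at hzero hone
      exact GraphLine.ext hbase (by linear_combination hone - hzero) (by linear_combination hzero)
  · refine ⟨X 1 - C m.base, (totalDegree_sub_C_le _ _).trans (by simp), ?_, by simp [restrictX]⟩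
    have hres : ℓ.restrictX (X 1 - C m.base) = Polynomial.C (ℓ.base - m.base) := by
      simp [restrictX]
    rw [hres, Polynomial.C_ne_zero]
    exact sub_ne_zero.2 hbase

theorem exists_totalDegree_lt_card_restrictX_eq_zero {S : Finset (GraphLine K)} {ℓ : GraphLine K}
    (hℓ : ℓ ∈ S) :
    ∃ E : MvPolynomial (Fin 3) K, E.totalDegree < #S ∧ ℓ.restrictX E ≠ 0 ∧
      ∀ m ∈ S, m ≠ ℓ → m.restrictX E = 0 := by
  classical
  choose! E hdeg hne hzero using fun (m : GraphLine K) (h : ℓ ≠ m) =>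
    exists_totalDegree_le_one_restrictX_eq_zero h
  refine ⟨∏ m ∈ S.erase ℓ, E m, ?_, ?_, fun m hm hmℓ => ?_⟩
  · calc (∏ m ∈ S.erase ℓ, E m).totalDegree
        ≤ ∑ m ∈ S.erase ℓ, (E m).totalDegree := totalDegree_finsetProd _ _
      _ ≤ ∑ _m ∈ S.erase ℓ, 1 := sum_le_sum fun m hm => hdeg m (ne_of_mem_erase hm).symm
      _ = #(S.erase ℓ) := by simp
      _ < #S := card_erase_lt_of_mem hℓ
  · rw [map_prod]
    exact prod_ne_zero_iff.2 fun m hm => hne m (ne_of_mem_erase hm).symm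
  · rw [map_prod]
    exact prod_eq_zero (mem_erase.2 ⟨hmℓ, hm⟩) (hzero m hmℓ.symm)

-- Lagrange interpolation: `g c = ∑ ℓ ∈ S, E ℓ * c ℓ (x)`, where `E ℓ` vanishes on the other lines.
theorem exists_linearMap_forall_restrictX_eq_zero_imp {S : Finset (GraphLine K)} {N T : ℕ}
    (hT : #S + T ≤ N + 2) :
    ∃ g : (S → Polynomial.degreeLT K T) →ₗ[K] MvPolynomial (Fin 3) K,
      LinearMap.range g ≤ restrictTotalDegree (Fin 3) K N ∧
        ∀ c, (∀ ℓ ∈ S, ℓ.restrictX (g c) = 0) → c = 0 := by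
  classical
  choose! E hdeg hne hzero using fun (ℓ : GraphLine K) (hℓ : ℓ ∈ S) =>
    exists_totalDegree_lt_card_restrictX_eq_zero hℓ
  let g : (S → Polynomial.degreeLT K T) →ₗ[K] MvPolynomial (Fin 3) K :=
    ∑ ℓ : S, LinearMap.mulLeft K (E ℓ) ∘ₗ (Polynomial.aeval (X 0)).toLinearMap ∘ₗ
      Submodule.subtype _ ∘ₗ LinearMap.proj ℓ
  have g_apply (c) : g c = ∑ ℓ : S, E ℓ * Polynomial.aeval (X 0) (c ℓ).1 := by
    simp [g]
  have restrictX_g (c) (ℓ : S) : ℓ.1.restrictX (g c) = ℓ.1.restrictX (E ℓ) * (c ℓ).1 := by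
    rw [g_apply, map_sum, sum_eq_single ℓ, map_mul, restrictX_aeval_X]
    · intro m _ hm
      rw [map_mul, hzero m m.2 ℓ ℓ.2 fun h => hm (Subtype.ext h.symm), zero_mul]
    · simp
  refine ⟨g, ?_, fun c hc => funext fun ℓ => Subtype.ext ?_⟩
  · rintro _ ⟨c, rfl⟩
    rw [g_apply]
    refine sum_mem fun ℓ _ => (mem_restrictTotalDegree _ _ _).2 ?_
    by_cases hc : (c ℓ).1 = 0
    · simp [hc]
    · have := (Polynomial.natDegree_lt_iff_degree_lt hc).2 (Polynomial.mem_degreeLT.1 (c ℓ).2)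
      have := totalDegree_aeval_X_le (0 : Fin 3) (c ℓ).1
      have := hdeg ℓ ℓ.2
      exact (totalDegree_mul _ _).trans (by lia)
  · exact (mul_eq_zero.1 ((restrictX_g c ℓ).symm.trans (hc ℓ ℓ.2))).resolve_left (hne ℓ ℓ.2)

theorem card_mul_add_finrank_le {S : Finset (GraphLine K)} {N T : ℕ} (hT : #S + T ≤ N + 2)
    {W : Submodule K (MvPolynomial (Fin 3) K)} (hWN : W ≤ restrictTotalDegree (Fin 3) K N)
    (hWS : ∀ F ∈ W, ∀ ℓ ∈ S, ℓ.restrictX F = 0) :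
    #S * T + Module.finrank K W ≤ Module.finrank K (restrictTotalDegree (Fin 3) K N) := by
  have := finite_degreeLT K T
  have := Submodule.finiteDimensional_of_le hWN
  obtain ⟨g, hgN, hg⟩ := exists_linearMap_forall_restrictX_eq_zero_imp (K := K) hT
  have hinj : Function.Injective g := LinearMap.ker_eq_bot.1 <| LinearMap.ker_eq_bot'.2
    fun c hc => hg c fun ℓ _ => by rw [hc, map_zero]
  have hdisj : LinearMap.range g ⊓ W = ⊥ := by
    refine (Submodule.eq_bot_iff _).2 ?_
    rintro _ ⟨⟨c, rfl⟩, hc⟩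
    rw [hg c (hWS _ hc), map_zero]
  calc #S * T + Module.finrank K W
      = Module.finrank K (LinearMap.range g) + Module.finrank K W := by
        simp [LinearMap.finrank_range_of_inj hinj, Module.finrank_pi_fintype, finrank_degreeLT]
    _ = Module.finrank K ↥(LinearMap.range g ⊔ W) := by
        rw [← Submodule.finrank_sup_add_finrank_inf_eq, hdisj, finrank_bot, add_zero]
    _ ≤ Module.finrank K (restrictTotalDegree (Fin 3) K N) :=
        Submodule.finrank_mono (sup_le hgN hWN)

theorem six_mul_card_mul_add_le {F G : MvPolynomial (Fin 3) K} (hF : Prime F) (hG : ¬ F ∣ G)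
    {S : Finset (GraphLine K)} (hSF : ∀ ℓ ∈ S, ℓ.restrictX F = 0)
    (hSG : ∀ ℓ ∈ S, ℓ.restrictX G = 0) {M T : ℕ}
    (hT : #S + T ≤ M + F.totalDegree + G.totalDegree + 2) :
    6 * (#S * T) + (M + G.totalDegree + 1) * (M + G.totalDegree + 2) * (M + G.totalDegree + 3) +
        (M + F.totalDegree + 1) * (M + F.totalDegree + 2) * (M + F.totalDegree + 3) ≤
      (M + F.totalDegree + G.totalDegree + 1) * (M + F.totalDegree + G.totalDegree + 2) *
        (M + F.totalDegree + G.totalDegree + 3) + (M + 1) * (M + 2) * (M + 3) := by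
  have hkoszul := finrank_add_finrank_le_finrank_sup hF hG M
  have hindep := card_mul_add_finrank_le hT
    (W := (restrictTotalDegree (Fin 3) K (M + G.totalDegree)).map (LinearMap.mulLeft K F) ⊔
      (restrictTotalDegree (Fin 3) K (M + F.totalDegree)).map (LinearMap.mulLeft K G))
    (sup_le ((map_mulLeft_restrictTotalDegree_le F _).trans_eq (by congr 1; ring))
      ((map_mulLeft_restrictTotalDegree_le G _).trans_eq (by congr 1; ring))) fun H hH ℓ hℓ => by
        obtain ⟨_, ⟨a, -, rfl⟩, _, ⟨b, -, rfl⟩, rfl⟩ := Submodule.mem_sup.1 hH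
        simp [hSF ℓ hℓ, hSG ℓ hℓ]
  simp only [← six_mul_finrank_restrictTotalDegree K]
  lia

theorem card_le_totalDegree_mul_totalDegree {F G : MvPolynomial (Fin 3) K} (hF : Prime F)
    (hG : ¬ F ∣ G) {S : Finset (GraphLine K)} (hSF : ∀ ℓ ∈ S, ℓ.restrictX F = 0)
    (hSG : ∀ ℓ ∈ S, ℓ.restrictX G = 0) : #S ≤ F.totalDegree * G.totalDegree := by
  by_contra! hlt
  have hdim := six_mul_card_mul_add_le hF hG hSF hSG (M := #S * #S + #S)
    (T := #S * #S + F.totalDegree + G.totalDegree + 2) (by lia)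
  -- The terms of highest degree in `M` of the dimension count are `r M ≤ d e M`.
  generalize F.totalDegree = d at *
  generalize G.totalDegree = e at *
  generalize #S = r at *
  have hleading : 2 * (r * (r * r + d + e + 2)) ≤ d * e * (2 * (r * r + r) + 4 + d + e) := by
    linarith
  have := Nat.mul_le_mul_right (r * r + r + d + e + 2) hlt
  nlinarith [hleading, Nat.zero_le (d * e * (d + e))]

theorem dvd_of_infinite_setOf_restrictX_eq_zero {F G : MvPolynomial (Fin 3) K} (hF : Prime F)
    (h : {ℓ : GraphLine K | ℓ.restrictX F = 0 ∧ ℓ.restrictX G = 0}.Infinite) : F ∣ G := by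
  by_contra hG
  obtain ⟨S, hS, hcard⟩ := h.exists_subset_card_eq (F.totalDegree * G.totalDegree + 1)
  have := card_le_totalDegree_mul_totalDegree hF hG (fun ℓ hℓ => (hS hℓ).1) fun ℓ hℓ => (hS hℓ).2
  lia

end GraphLine

end Bezout

/-! ### Surfaces all of whose tangents parallel to the `xz`-plane lie on them -/

section Tangent

open MvPolynomial

section Coeffwise

variable {R A : Type*} [CommRing R] [CommRing A] [Algebra R A] (d : Derivation R A A)

/-- The extension of a derivation to polynomials that acts on the coefficients, as a derivation
with values in polynomials. -/
noncomputable def coeffwise : Derivation R (Polynomial A) (Polynomial A) :=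
  PolynomialModule.equivPolynomialSelf.compDer d.mapCoeffs

theorem coeff_coeffwise (f : Polynomial A) (j : ℕ) : (coeffwise d f).coeff j = d (f.coeff j) :=
  rfl

@[simp]
theorem coeffwise_C (a : A) : coeffwise d (Polynomial.C a) = Polynomial.C (d a) := by
  ext j
  rw [coeff_coeffwise, Polynomial.coeff_C, Polynomial.coeff_C, apply_ite d, map_zero]

@[simp]
theorem coeffwise_X : coeffwise d Polynomial.X = 0 := by
  ext j
  rw [coeff_coeffwise, Polynomial.coeff_X, apply_ite d, map_zero, Derivation.map_one_eq_zero,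
    ite_self, Polynomial.coeff_zero]

end Coeffwise

section Identities

variable {R : Type*} [CommRing R] (F : MvPolynomial (Fin 3) R)

/-- The derivative along the direction `(F_z, 0, -F_x)`, which is tangent to the sections of the
surface `F = 0` by the planes `y = const`. -/
noncomputable def tangentDeriv :
    Derivation R (MvPolynomial (Fin 3) R) (MvPolynomial (Fin 3) R) :=
  pderiv 2 F • pderiv 0 - pderiv 0 F • pderiv 2

theorem tangentDeriv_apply (G : MvPolynomial (Fin 3) R) :
    tangentDeriv F G = pderiv 2 F * pderiv 0 G - pderiv 0 F * pderiv 2 G :=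
  rfl

theorem tangentDeriv_self : tangentDeriv F F = 0 := by
  rw [tangentDeriv_apply]
  ring

theorem dvd_tangentDeriv {F G : MvPolynomial (Fin 3) R} (h : F ∣ G) : F ∣ tangentDeriv F G := by
  obtain ⟨c, rfl⟩ := h
  rw [Derivation.leibniz, tangentDeriv_self, smul_zero, add_zero]
  exact dvd_mul_right F _

/-- The bordered Hessian `F_z² F_xx - 2 F_x F_z F_xz + F_x² F_zz` of the sections of the surface
`F = 0` by the planes `y = const`. It vanishes along every X-line on the surface. -/
noncomputable def sectionHessian : MvPolynomial (Fin 3) R :=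
  pderiv 2 F * tangentDeriv F (pderiv 0 F) - pderiv 0 F * tangentDeriv F (pderiv 2 F)

/-- The expansion in `T` of a polynomial at the point `(x + T F_z, y, z - T F_x)` of the tangent
to the section of `F = 0` through `(x, y, z)`. -/
noncomputable def tangentExpansion :
    MvPolynomial (Fin 3) R →ₐ[R] Polynomial (MvPolynomial (Fin 3) R) :=
  aeval ![.C (X 0) + .X * .C (pderiv 2 F), .C (X 1), .C (X 2) - .X * .C (pderiv 0 F)]

theorem coeff_zero_tangentExpansion (G : MvPolynomial (Fin 3) R) :
    (tangentExpansion F G).coeff 0 = G := by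
  have h : ((Polynomial.aeval 0).restrictScalars R).comp (tangentExpansion F) = AlgHom.id R _ :=
    MvPolynomial.algHom_ext fun i => by fin_cases i <;> simp [tangentExpansion]
  rw [Polynomial.coeff_zero_eq_aeval_zero]
  exact DFunLike.congr_fun h G

theorem eval_eval_tangentExpansion (x : Fin 3 → R) (t : R) (G : MvPolynomial (Fin 3) R) :
    eval x ((tangentExpansion F G).eval (C t)) =
      eval ![x 0 + t * eval x (pderiv 2 F), x 1, x 2 - t * eval x (pderiv 0 F)] G := by
  have h : (aeval x).comp (((Polynomial.aeval (C t)).restrictScalars R).comp (tangentExpansion F)) =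
      aeval ![x 0 + t * eval x (pderiv 2 F), x 1, x 2 - t * eval x (pderiv 0 F)] :=
    MvPolynomial.algHom_ext fun i => by
      fin_cases i <;> simp [tangentExpansion, aeval_eq_eval, mul_comm t]
  exact DFunLike.congr_fun h G

theorem natDegree_tangentExpansion_le (G : MvPolynomial (Fin 3) R) :
    (tangentExpansion F G).natDegree ≤ G.totalDegree := by
  rw [tangentExpansion, ← aeval_map_algebraMap (MvPolynomial (Fin 3) R), ← mul_one G.totalDegree]
  refine aeval_natDegree_le _ (Finset.sup_mono (support_map_subset _ _)) _ fun i => ?_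
  fin_cases i
  · simp only [Fin.zero_eta, Matrix.cons_val_zero]
    compute_degree
  · simp
  · simp only [Fin.reduceFinMk, Matrix.cons_val]
    compute_degree

theorem derivative_tangentExpansion (G : MvPolynomial (Fin 3) R) :
    Polynomial.derivative (tangentExpansion F G) =
      tangentExpansion F (pderiv 0 G) * .C (pderiv 2 F) -
        tangentExpansion F (pderiv 2 G) * .C (pderiv 0 F) := by
  let deriv : Derivation R (Polynomial (MvPolynomial (Fin 3) R)) _ :=
    (Polynomial.derivative' (R := MvPolynomial (Fin 3) R)).restrictScalars R
  refine (derivation_aeval deriv _ G).trans ?_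
  simp only [deriv, Polynomial.derivative', Derivation.restrictScalars_apply, Derivation.mk_coe,
    LinearMap.coe_mk, AddHom.coe_mk, smul_eq_mul, Fin.sum_univ_three, tangentExpansion,
    Matrix.cons_val_zero, Matrix.cons_val_one, Matrix.cons_val, Polynomial.derivative_add,
    Polynomial.derivative_sub, Polynomial.derivative_mul, Polynomial.derivative_C,
    Polynomial.derivative_X]
  ring

theorem coeffwise_tangentDeriv_tangentExpansion (G : MvPolynomial (Fin 3) R) :
    coeffwise (tangentDeriv F) (tangentExpansion F G) =
      tangentExpansion F (pderiv 0 G) *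
          (.C (pderiv 2 F) + .X * .C (tangentDeriv F (pderiv 2 F))) -
        tangentExpansion F (pderiv 2 G) *
          (.C (pderiv 0 F) + .X * .C (tangentDeriv F (pderiv 0 F))) := by
  have hX0 : tangentDeriv F (X 0) = pderiv 2 F := by
    simp [tangentDeriv_apply, pderiv_X_of_ne (show (0 : Fin 3) ≠ 2 by decide)]
  have hX1 : tangentDeriv F (X 1) = 0 := by
    simp [tangentDeriv_apply, pderiv_X_of_ne (show (1 : Fin 3) ≠ 2 by decide),
      pderiv_X_of_ne (show (1 : Fin 3) ≠ 0 by decide)]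
  have hX2 : tangentDeriv F (X 2) = -pderiv 0 F := by
    simp [tangentDeriv_apply, pderiv_X_of_ne (show (2 : Fin 3) ≠ 0 by decide)]
  refine (derivation_aeval (coeffwise (tangentDeriv F)) _ G).trans ?_
  simp only [smul_eq_mul, Fin.sum_univ_three, tangentExpansion, Matrix.cons_val_zero,
    Matrix.cons_val_one, Matrix.cons_val, map_add, map_sub, map_neg, map_zero, Derivation.leibniz,
    coeffwise_C, coeffwise_X, hX0, hX1, hX2]
  ring

-- Along a line, the derivatives with respect to the base point and to the parameter agree. The
-- tangent field satisfies this up to a multiple of `sectionHessian F`, which gives a recursion for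
-- the coefficients of the expansion.
theorem succ_mul_coeff_succ_tangentExpansion (j : ℕ) :
    pderiv 2 F * ((tangentExpansion F F).coeff (j + 1) * (j + 1)) =
      tangentDeriv F ((tangentExpansion F F).coeff j) * pderiv 2 F -
        (tangentExpansion F F).coeff j * (j * tangentDeriv F (pderiv 2 F)) +
        (tangentExpansion F (pderiv 2 F) * .X).coeff j * sectionHessian F := by
  have hderiv := derivative_tangentExpansion F F
  have hcoeffwise : coeffwise (tangentDeriv F) (tangentExpansion F F) * .C (pderiv 2 F) =
      Polynomial.derivative (tangentExpansion F F) * .C (pderiv 2 F) +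
        (Polynomial.derivative (tangentExpansion F F) * .X) * .C (tangentDeriv F (pderiv 2 F)) -
        (tangentExpansion F (pderiv 2 F) * .X) * .C (sectionHessian F) := by
    rw [coeffwise_tangentDeriv_tangentExpansion, hderiv, sectionHessian, map_sub, map_mul, map_mul]
    ring
  have hX : (Polynomial.derivative (tangentExpansion F F) * .X).coeff j =
      (tangentExpansion F F).coeff j * j := by
    cases j <;> simp [Polynomial.coeff_derivative]
  have := congrArg (Polynomial.coeff · j) hcoeffwise
  simp only [Polynomial.coeff_sub, Polynomial.coeff_add, Polynomial.coeff_mul_C, coeff_coeffwise,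
    hX, Polynomial.coeff_derivative] at this
  linear_combination -this

theorem totalDegree_mul_sub_mul_le {σ : Type*} {a b c d : MvPolynomial σ R} {n m : ℕ}
    (ha : a.totalDegree ≤ n) (hb : b.totalDegree ≤ m) (hc : c.totalDegree ≤ n)
    (hd : d.totalDegree ≤ m) : (a * b - c * d).totalDegree ≤ n + m :=
  (totalDegree_sub _ _).trans <| max_le
    ((totalDegree_mul _ _).trans (add_le_add ha hb))
    ((totalDegree_mul _ _).trans (add_le_add hc hd))

theorem totalDegree_sectionHessian_le : (sectionHessian F).totalDegree ≤ 3 * F.totalDegree := by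
  have hfirst (i) := totalDegree_pderiv_le i F
  have hsecond (i j) := (totalDegree_pderiv_le i (pderiv j F)).trans (hfirst j)
  have htangent (i) : (tangentDeriv F (pderiv i F)).totalDegree ≤ F.totalDegree + F.totalDegree :=
    totalDegree_mul_sub_mul_le (hfirst 2) (hsecond 0 i) (hfirst 0) (hsecond 2 i)
  refine (totalDegree_mul_sub_mul_le (hfirst 2) (htangent 0) (hfirst 0) (htangent 2)).trans_eq ?_
  ring

end Identities

theorem GraphLine.restrictX_sectionHessian_eq_zero {R : Type*} [CommRing R] {ℓ : GraphLine R}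
    {F : MvPolynomial (Fin 3) R} (h : ℓ.restrictX F = 0) : ℓ.restrictX (sectionHessian F) = 0 := by
  have hfirst := ℓ.derivative_restrictX F
  rw [h] at hfirst
  have hsecond := congrArg Polynomial.derivative hfirst
  simp only [Polynomial.derivative_zero, Polynomial.derivative_add, Polynomial.derivative_mul,
    Polynomial.derivative_C, derivative_restrictX] at hfirst hsecond
  have hx : ℓ.restrictX (pderiv 0 F) = -(.C ℓ.slope * ℓ.restrictX (pderiv 2 F)) := by
    linear_combination -hfirst
  simp only [sectionHessian, tangentDeriv_apply, map_sub, map_mul]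
  rw [hx]
  linear_combination -(ℓ.restrictX (pderiv 2 F)) ^ 2 * hsecond

variable {K : Type*} [Field K] {p : ℕ} {F : MvPolynomial (Fin 3) K}

theorem dvd_coeff_tangentExpansion (hp : CharAtLeast K p) (hF : Prime F) (hd : F.totalDegree < p)
    (hz : ¬ F ∣ pderiv 2 F) (hH : F ∣ sectionHessian F) (j : ℕ) :
    F ∣ (tangentExpansion F F).coeff j := by
  induction j with
  | zero => rw [coeff_zero_tangentExpansion]
  | succ j ih =>
    rcases lt_or_ge F.totalDegree (j + 1) with hj | hj
    · have hlt := (natDegree_tangentExpansion_le F F).trans_lt hj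
      rw [Polynomial.coeff_eq_zero_of_natDegree_lt hlt]
      exact dvd_zero F
    have hrec : F ∣ pderiv 2 F * ((tangentExpansion F F).coeff (j + 1) * (j + 1)) := by
      rw [succ_mul_coeff_succ_tangentExpansion]
      exact dvd_add (dvd_sub ((dvd_tangentDeriv ih).mul_right _) (ih.mul_right _)) (hH.mul_left _)
    have hunit : IsUnit ((j : MvPolynomial (Fin 3) K) + 1) := by
      have hj0 : ((j + 1 : ℕ) : K) ≠ 0 := hp _ j.succ_pos (hj.trans_lt hd)
      simpa using hj0.isUnit.map (C : K →+* MvPolynomial (Fin 3) K)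
    exact hunit.dvd_mul_right.1 ((hF.dvd_or_dvd hrec).resolve_left hz)

theorem eval_tangent_eq_zero (hp : CharAtLeast K p) (hF : Prime F) (hd : F.totalDegree < p)
    (hz : ¬ F ∣ pderiv 2 F) (hH : F ∣ sectionHessian F) {x : Fin 3 → K} (hx : eval x F = 0)
    (t : K) :
    eval ![x 0 + t * eval x (pderiv 2 F), x 1, x 2 - t * eval x (pderiv 0 F)] F = 0 := by
  have hdvd : F ∣ (tangentExpansion F F).eval (C t) := by
    rw [Polynomial.eval_eq_sum_range]
    exact dvd_sum fun j _ => (dvd_coeff_tangentExpansion hp hF hd hz hH j).mul_right _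
  obtain ⟨c, hc⟩ := hdvd
  rw [← eval_eval_tangentExpansion, hc, map_mul, hx, zero_mul]

end Tangent

/-! ### Surfaces ruled by X-lines -/

namespace GraphLine

section Ruled

open MvPolynomial

variable {K : Type*} [Field K] {F : MvPolynomial (Fin 3) K} {m : GraphLine K} {v : K}

/-- The X-line in the plane `y = v` through the point of the Y-line `m` with parameter `v`, tangent
there to the section of the surface `F = 0` with this plane. It is only meaningful if `∂F/∂z` does
not vanish at the point. -/
noncomputable def tangentLine (F : MvPolynomial (Fin 3) K) (m : GraphLine K) (v : K) :
    GraphLine K where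
  base := v
  slope := -((m.restrictY (pderiv 0 F)).eval v / (m.restrictY (pderiv 2 F)).eval v)
  intercept := m.height v +
    (m.restrictY (pderiv 0 F)).eval v / (m.restrictY (pderiv 2 F)).eval v * m.base

/-- The polynomial whose zero set in a plane `y = v` with `∂F/∂z ≠ 0` is the line
`tangentLine F m v`. -/
noncomputable def tangentRuling (F : MvPolynomial (Fin 3) K) (m : GraphLine K) :
    MvPolynomial (Fin 3) K :=
  Polynomial.aeval (X 1) (m.restrictY (pderiv 2 F)) * (X 2 - C m.slope * X 1 - C m.intercept) +
    Polynomial.aeval (X 1) (m.restrictY (pderiv 0 F)) * (X 0 - C m.base)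

theorem eval_tangentRuling (F : MvPolynomial (Fin 3) K) (m : GraphLine K) (x : Fin 3 → K) :
    eval x (tangentRuling F m) =
      (m.restrictY (pderiv 2 F)).eval (x 1) * (x 2 - m.height (x 1)) +
        (m.restrictY (pderiv 0 F)).eval (x 1) * (x 0 - m.base) := by
  have heval (B : Polynomial K) : eval x (Polynomial.aeval (X 1) B) = B.eval (x 1) := by
    rw [← coe_aeval_eq_eval, ← Polynomial.coe_aeval_eq_eval]
    exact (Polynomial.aeval_algHom_apply (aeval x) (X 1) B).symm.trans (by simp)
  simp only [tangentRuling, height, map_add, map_sub, map_mul, eval_X, eval_C, heval]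
  ring

theorem eval_tangentRuling_eq_zero_iff (hv : (m.restrictY (pderiv 2 F)).eval v ≠ 0) (t z : K) :
    eval ![t, v, z] (tangentRuling F m) = 0 ↔ (tangentLine F m v).height t = z := by
  simp only [eval_tangentRuling, tangentLine, height, Matrix.cons_val_zero, Matrix.cons_val_one,
    Matrix.cons_val]
  field_simp
  constructor <;> intro h <;> linear_combination -h

theorem tangentLine_meets {l : GraphLine K} (hv : (m.restrictY (pderiv 2 F)).eval v ≠ 0)
    (hl : l.restrictY (tangentRuling F m) = 0) : (tangentLine F m v).Meets l := by
  rw [Meets]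
  refine (eval_tangentRuling_eq_zero_iff hv _ _).1 ?_
  exact (l.eval_restrictY _ v).symm.trans (by simp [hl])

variable [Infinite K]

theorem restrictX_tangentRuling (hv : (m.restrictY (pderiv 2 F)).eval v ≠ 0) :
    (tangentLine F m v).restrictX (tangentRuling F m) = 0 := by
  refine Polynomial.funext fun t => ?_
  rw [eval_restrictX, Polynomial.eval_zero]
  exact (eval_tangentRuling_eq_zero_iff hv _ _).2 rfl

theorem restrictX_tangentLine_eq_zero {p : ℕ} (hp : CharAtLeast K p) (hF : Prime F)
    (hd : F.totalDegree < p) (hz : ¬F ∣ pderiv 2 F) (hH : F ∣ sectionHessian F)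
    (hm : m.restrictY F = 0) (hv : (m.restrictY (pderiv 2 F)).eval v ≠ 0) :
    (tangentLine F m v).restrictX F = 0 := by
  refine Polynomial.funext fun t => ?_
  have hpoint : eval ![m.base, v, m.height v] F = 0 := by
    rw [← eval_restrictY, hm, Polynomial.eval_zero]
  have htangent := eval_tangent_eq_zero hp hF hd hz hH hpoint
    ((t - m.base) / (m.restrictY (pderiv 2 F)).eval v)
  rw [← eval_restrictY, ← eval_restrictY] at htangent
  rw [eval_restrictX, Polynomial.eval_zero, ← htangent]
  congr 2
  ext i
  fin_cases i
  · simp [hv]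
  · simp [tangentLine]
  · simp only [tangentLine, height, Fin.reduceFinMk, Matrix.cons_val]
    field_simp
    ring

theorem dvd_tangentRuling {p : ℕ} (hp : CharAtLeast K p) (hF : Prime F) (hd : F.totalDegree < p)
    (hz : ¬F ∣ pderiv 2 F) (hH : F ∣ sectionHessian F) (hm : m.restrictY F = 0)
    (hmz : m.restrictY (pderiv 2 F) ≠ 0) : F ∣ tangentRuling F m := by
  have hinf : {v | ¬(m.restrictY (pderiv 2 F)).IsRoot v}.Infinite :=
    (Polynomial.finite_setOfPred_isRoot hmz).infinite_compl
  have hinj : Function.Injective (tangentLine F m) := fun _ _ h => congrArg base h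
  refine dvd_of_infinite_setOf_restrictX_eq_zero hF ((hinf.image hinj.injOn).mono ?_)
  rintro _ ⟨v, hv, rfl⟩
  exact ⟨restrictX_tangentLine_eq_zero hp hF hd hz hH hm hv, restrictX_tangentRuling hv⟩

theorem exists_forall_restrictY_eq_zero_meets_and_meets {p : ℕ} (hp : CharAtLeast K p)
    (hF : Prime F) (hd : F.totalDegree < p) (hz : ¬F ∣ pderiv 2 F) (hH : F ∣ sectionHessian F)
    (hm : m.restrictY F = 0) (hmz : m.restrictY (pderiv 2 F) ≠ 0) :
    ∃ a b : GraphLine K, a.base ≠ b.base ∧ ∀ l, l.restrictY F = 0 → a.Meets l ∧ b.Meets l := by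
  have hinf : {v | ¬(m.restrictY (pderiv 2 F)).IsRoot v}.Infinite :=
    (Polynomial.finite_setOfPred_isRoot hmz).infinite_compl
  obtain ⟨a, ha, b, hb, hab⟩ := hinf.nontrivial
  refine ⟨tangentLine F m a, tangentLine F m b, hab, fun l hl => ?_⟩
  have hruling : l.restrictY (tangentRuling F m) = 0 := by
    obtain ⟨c, hc⟩ := dvd_tangentRuling hp hF hd hz hH hm hmz
    rw [hc, map_mul, hl, zero_mul]
  exact ⟨tangentLine_meets ha hruling, tangentLine_meets hb hruling⟩

theorem restrictY_ne_zero_of_notMem_vars {ℓ : GraphLine K} (hF : Prime F) (hvars : 2 ∉ F.vars)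
    (hℓ : ℓ.restrictX F = 0) (m : GraphLine K) : m.restrictY F ≠ 0 := by
  intro hm
  have hdvd : F ∣ X 1 - C ℓ.base := by
    have hinj : Function.Injective (GraphLine.mk ℓ.base 0) := fun _ _ h => congrArg intercept h
    refine dvd_of_infinite_setOf_restrictX_eq_zero hF
      ((Set.infinite_range_of_injective hinj).mono ?_)
    rintro _ ⟨b, rfl⟩
    refine ⟨Polynomial.funext fun t => ?_, by simp [restrictX]⟩
    have hpoint := ℓ.eval_restrictX F t
    rw [hℓ] at hpoint
    rw [eval_restrictX, hpoint]
    refine eval₂Hom_congr' rfl (fun i hi _ => ?_) rfl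
    fin_cases i
    · rfl
    · rfl
    · exact absurd hi hvars
  obtain ⟨c, hc⟩ := hdvd
  have hzero : m.restrictY (X 1 - C ℓ.base) = 0 := by rw [hc, map_mul, hm, zero_mul]
  have hone := congrArg (Polynomial.eval (ℓ.base + 1)) hzero
  simp [restrictY] at hone

end Ruled

end GraphLine

/-! ### Incidences between X-lines and Y-lines -/

namespace GraphLine

section Incidences

variable {K : Type*} [CommRing K] [DecidableEq K]

/-- The number of pairs consisting of an X-line of `P` and a Y-line of `Q` that meet. -/
def incidences (P Q : Finset (GraphLine K)) : ℕ :=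
  ∑ ℓ ∈ P, #{m ∈ Q | ℓ.Meets m}

theorem incidences_comm (P Q : Finset (GraphLine K)) : incidences P Q = incidences Q P := by
  refine (sum_card_bipartiteAbove_eq_sum_card_bipartiteBelow Meets).trans ?_
  simp only [bipartiteBelow, incidences, meets_comm]

theorem incidences_filter_add_incidences_filter_not (P Q : Finset (GraphLine K))
    (φ : GraphLine K → Prop) [DecidablePred φ] :
    incidences {ℓ ∈ P | φ ℓ} Q + incidences {ℓ ∈ P | ¬φ ℓ} Q = incidences P Q :=
  sum_filter_add_sum_filter_not P φ _

theorem incidences_union {P P' : Finset (GraphLine K)} (h : Disjoint P P')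
    (Q : Finset (GraphLine K)) : incidences (P ∪ P') Q = incidences P Q + incidences P' Q :=
  sum_union h

theorem incidences_le_mul_card {P Q : Finset (GraphLine K)} {c : ℕ}
    (h : ∀ ℓ ∈ P, #{m ∈ Q | ℓ.Meets m} ≤ c) : incidences P Q ≤ c * #P :=
  (sum_le_card_nsmul P _ c h).trans_eq (mul_comm _ _)

theorem incidences_le_card_mul_card (P Q : Finset (GraphLine K)) : incidences P Q ≤ #Q * #P :=
  incidences_le_mul_card fun _ _ => card_filter_le _ _

theorem incidences_le_two_mul {P Q : Finset (GraphLine K)} {a B : ℕ} (hP : #P ≤ 2 * a)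
    (h : ∀ P' ⊆ P, #P' ≤ a → incidences P' Q ≤ B) : incidences P Q ≤ 2 * B := by
  obtain ⟨P', hP'P, hP'⟩ := exists_subset_card_eq (min_le_left #P a)
  have hcard := card_sdiff_add_card_eq_card hP'P
  have hunion := incidences_union (disjoint_sdiff : Disjoint P' (P \ P')) Q
  rw [union_sdiff_of_subset hP'P] at hunion
  have := h P' hP'P (by lia)
  have := h (P \ P') sdiff_subset (by lia)
  lia

theorem incidences_le_four_mul {P Q : Finset (GraphLine K)} {a B : ℕ} (hP : #P ≤ 2 * a)
    (hQ : #Q ≤ 2 * a) (h : ∀ P' ⊆ P, ∀ Q' ⊆ Q, #P' ≤ a → #Q' ≤ a → incidences P' Q' ≤ B) :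
    incidences P Q ≤ 4 * B := by
  refine (incidences_le_two_mul (B := 2 * B) hP fun P' hP'P hP' => ?_).trans (by lia)
  rw [incidences_comm]
  refine incidences_le_two_mul hQ fun Q' hQ'Q hQ' => ?_
  rw [incidences_comm]
  exact h P' hP'P Q' hQ'Q hP' hQ'

/-- Any two X-lines in distinct planes `y = const` have at most `k` common transversals in `Q`. -/
def TransversalsLE (Q : Finset (GraphLine K)) (k : ℕ) : Prop :=
  ∀ a b : GraphLine K, a.base ≠ b.base → #{m ∈ Q | a.Meets m ∧ b.Meets m} ≤ k

theorem TransversalsLE.mono {Q Q' : Finset (GraphLine K)} {k : ℕ} (h : TransversalsLE Q k)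
    (hs : Q' ⊆ Q) : TransversalsLE Q' k :=
  fun a b hab => (card_le_card (filter_subset_filter _ hs)).trans (h a b hab)

variable [IsDomain K] {F : MvPolynomial (Fin 3) K} {P Q : Finset (GraphLine K)}

theorem incidences_le_totalDegree_mul_card_left (hQ : PairwiseSkew Q)
    (hP : ∀ ℓ ∈ P, ℓ.restrictX F ≠ 0) (hQF : ∀ m ∈ Q, m.restrictY F = 0) :
    incidences P Q ≤ F.totalDegree * #P := by
  refine incidences_le_mul_card fun ℓ hℓ => ?_
  refine le_trans (card_le_card fun m hm => ?_)
    ((card_filter_meets_and_root_le ℓ hQ (hP ℓ hℓ)).trans (natDegree_restrictX_le ℓ F))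
  obtain ⟨hmQ, hmeets⟩ := mem_filter.1 hm
  refine mem_filter.2 ⟨hmQ, hmeets, ?_⟩
  rw [hmeets.eval_restrictX_eq, hQF m hmQ, Polynomial.eval_zero]

theorem incidences_le_totalDegree_mul_card_right (hP : PairwiseSkew P)
    (hQ : ∀ m ∈ Q, m.restrictY F ≠ 0) (hPF : ∀ ℓ ∈ P, ℓ.restrictX F = 0) :
    incidences P Q ≤ F.totalDegree * #Q := by
  rw [incidences_comm]
  refine incidences_le_mul_card fun m hm => ?_
  refine le_trans (card_le_card fun ℓ hℓ => ?_)
    ((card_filter_meets_and_root_le m hP (hQ m hm)).trans (natDegree_restrictY_le m F))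
  obtain ⟨hℓP, hmeets⟩ := mem_filter.1 hℓ
  refine mem_filter.2 ⟨hℓP, hmeets, ?_⟩
  rw [← (meets_comm.1 hmeets).eval_restrictX_eq, hPF ℓ hℓP, Polynomial.eval_zero]

end Incidences

section Surface

open MvPolynomial

variable {K : Type*} [Field K] [Infinite K] [DecidableEq K] {p k : ℕ}
  {F : MvPolynomial (Fin 3) K} {P Q : Finset (GraphLine K)}

theorem card_filter_restrictY_pderiv_ne_zero_le [DecidableEq (Polynomial K)]
    (hp : CharAtLeast K p) (hF : Prime F) (hd : F.totalDegree < p) (hz : ¬F ∣ pderiv 2 F)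
    (hH : F ∣ sectionHessian F) (hk : TransversalsLE Q k) :
    #{m ∈ Q | m.restrictY F = 0 ∧ m.restrictY (pderiv 2 F) ≠ 0} ≤ k := by
  rcases eq_empty_or_nonempty {m ∈ Q | m.restrictY F = 0 ∧ m.restrictY (pderiv 2 F) ≠ 0}
    with hempty | ⟨m, hm⟩
  · simp [hempty]
  obtain ⟨-, hmF, hmz⟩ := mem_filter.1 hm
  obtain ⟨a, b, hab, hmeets⟩ :=
    exists_forall_restrictY_eq_zero_meets_and_meets hp hF hd hz hH hmF hmz
  refine (card_le_card fun l hl => ?_).trans (hk a b hab)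
  obtain ⟨hlQ, hlF, -⟩ := mem_filter.1 hl
  exact mem_filter.2 ⟨hlQ, hmeets l hlF⟩

theorem incidences_le_of_dvd_sectionHessian (hp : CharAtLeast K p) (hF : Prime F)
    (hd : F.totalDegree < p) (hz : ¬F ∣ pderiv 2 F) (hH : F ∣ sectionHessian F)
    (hP : PairwiseSkew P) (hQ : PairwiseSkew Q) (hk : TransversalsLE Q k)
    (hPF : ∀ ℓ ∈ P, ℓ.restrictX F = 0) (hPz : ∀ ℓ ∈ P, ℓ.restrictX (pderiv 2 F) ≠ 0) :
    incidences P Q ≤ F.totalDegree * #Q + (F.totalDegree + k) * #P := by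
  classical
  set Qoff : Finset (GraphLine K) := {m ∈ Q | ¬m.restrictY F = 0}
  set Qon : Finset (GraphLine K) := {m ∈ Q | m.restrictY F = 0}
  set Qsing : Finset (GraphLine K) := {m ∈ Qon | m.restrictY (pderiv 2 F) = 0}
  set Qreg : Finset (GraphLine K) := {m ∈ Qon | ¬m.restrictY (pderiv 2 F) = 0}
  have hsplit : incidences P Q = incidences P Qsing + incidences P Qreg + incidences P Qoff := by
    simp only [incidences_comm P]
    rw [incidences_filter_add_incidences_filter_not, incidences_filter_add_incidences_filter_not]
  have hoff : incidences P Qoff ≤ F.totalDegree * #Q :=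
    (incidences_le_totalDegree_mul_card_right hP (fun m hm => (mem_filter.1 hm).2) hPF).trans
      (Nat.mul_le_mul_left _ (card_filter_le _ _))
  have hsing : incidences P Qsing ≤ F.totalDegree * #P := by
    refine (incidences_le_totalDegree_mul_card_left (hQ.mono ?_) hPz
      fun m hm => (mem_filter.1 hm).2).trans (Nat.mul_le_mul_right _ (totalDegree_pderiv_le 2 F))
    exact (filter_subset _ _).trans (filter_subset _ _)
  have hreg : incidences P Qreg ≤ k * #P := by
    refine (incidences_le_card_mul_card P Qreg).trans (Nat.mul_le_mul_right _ ?_)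
    rw [show Qreg = _ from filter_filter _ _ _]
    exact card_filter_restrictY_pderiv_ne_zero_le hp hF hd hz hH hk
  lia

theorem exists_incidences_le_of_prime (hp : CharAtLeast K p) (hF : Prime F)
    (hd : F.totalDegree < p) (hP : PairwiseSkew P) (hQ : PairwiseSkew Q)
    (hk : TransversalsLE Q k) (hPF : ∀ ℓ ∈ P, ℓ.restrictX F = 0) :
    ∃ P' ⊆ P, #P' ≤ 3 * F.totalDegree ^ 2 ∧
      incidences P Q ≤ F.totalDegree * #Q + (F.totalDegree + k) * #P + incidences P' Q := by
  classical
  rcases P.eq_empty_or_nonempty with rfl | ⟨ℓ, hℓ⟩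
  · exact ⟨∅, by simp [incidences]⟩
  by_cases hz0 : pderiv 2 F = 0
  · have hvars := notMem_vars_of_pderiv_eq_zero hp hd hz0
    refine ⟨∅, empty_subset _, by simp, ?_⟩
    have := incidences_le_totalDegree_mul_card_right hP
      (fun m (_ : m ∈ Q) => restrictY_ne_zero_of_notMem_vars hF hvars (hPF ℓ hℓ) m) hPF
    lia
  have hz : ¬F ∣ pderiv 2 F := not_dvd_pderiv_of_ne_zero hz0
  by_cases hH : F ∣ sectionHessian F
  · refine ⟨{ℓ ∈ P | ℓ.restrictX (pderiv 2 F) = 0}, filter_subset _ _, ?_, ?_⟩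
    · have := card_le_totalDegree_mul_totalDegree hF hz
        (fun ℓ hℓ => hPF ℓ (mem_filter.1 hℓ).1) fun ℓ hℓ => (mem_filter.1 hℓ).2
      nlinarith [totalDegree_pderiv_le 2 F]
    · rw [← incidences_filter_add_incidences_filter_not P Q fun ℓ => ℓ.restrictX (pderiv 2 F) = 0]
      have := incidences_le_of_dvd_sectionHessian hp hF hd hz hH (hP.mono (filter_subset _ _)) hQ hk
        (fun ℓ hℓ => hPF ℓ (mem_filter.1 hℓ).1) fun ℓ hℓ => (mem_filter.1 hℓ).2
      have := Nat.mul_le_mul_left (F.totalDegree + k)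
        (card_filter_le P fun ℓ => ¬ℓ.restrictX (pderiv 2 F) = 0)
      lia
  · refine ⟨P, Subset.rfl, ?_, Nat.le_add_left _ _⟩
    have := card_le_totalDegree_mul_totalDegree hF hH hPF
      fun ℓ hℓ => restrictX_sectionHessian_eq_zero (hPF ℓ hℓ)
    nlinarith [totalDegree_sectionHessian_le F]

theorem exists_incidences_le_of_restrictX_eq_zero (hp : CharAtLeast K p) (hF : F ≠ 0)
    (hd : F.totalDegree < p) (hP : PairwiseSkew P) (hQ : PairwiseSkew Q)
    (hk : TransversalsLE Q k) (hPF : ∀ ℓ ∈ P, ℓ.restrictX F = 0) :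
    ∃ P' ⊆ P, #P' ≤ 3 * F.totalDegree ^ 2 ∧
      incidences P Q ≤ F.totalDegree * #Q + (F.totalDegree + k) * #P + incidences P' Q := by
  classical
  induction F using UniqueFactorizationMonoid.induction_on_prime generalizing P with
  | h₁ => exact absurd rfl hF
  | h₂ x hx =>
    have hempty : P = ∅ := eq_empty_of_forall_notMem fun ℓ hℓ => by
      have hunit := hx.map ℓ.restrictX
      rw [hPF ℓ hℓ] at hunit
      exact not_isUnit_zero hunit
    exact ⟨∅, by simp [hempty, incidences]⟩
  | h₃ G π hG hπ ih =>
    have hdeg := totalDegree_mul_of_isDomain hπ.ne_zero hG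
    rw [hdeg] at hd ⊢
    obtain ⟨P₁, hP₁, hcard₁, hI₁⟩ := exists_incidences_le_of_prime hp hπ (by lia)
      (hP.mono (filter_subset (fun ℓ => ℓ.restrictX π = 0) P)) hQ hk
      fun ℓ hℓ => (mem_filter.1 hℓ).2
    obtain ⟨P₂, hP₂, hcard₂, hI₂⟩ := ih hG (by lia)
      (hP.mono (filter_subset (fun ℓ => ¬ℓ.restrictX π = 0) P)) fun ℓ hℓ => by
        have hmul := hPF ℓ (mem_filter.1 hℓ).1
        rw [map_mul] at hmul
        exact (mul_eq_zero.1 hmul).resolve_left (mem_filter.1 hℓ).2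
    have hdisj : Disjoint P₁ P₂ := (disjoint_filter_filter_not P P _).mono hP₁ hP₂
    refine ⟨P₁ ∪ P₂, union_subset (hP₁.trans (filter_subset _ _)) (hP₂.trans (filter_subset _ _)),
      ?_, ?_⟩
    · refine (card_union_le _ _).trans ?_
      nlinarith [Nat.zero_le (π.totalDegree * G.totalDegree)]
    · rw [incidences_union hdisj,
        ← incidences_filter_add_incidences_filter_not P Q fun ℓ => ℓ.restrictX π = 0,
        ← card_filter_add_card_filter_not (s := P) fun ℓ => ℓ.restrictX π = 0]
      nlinarith

theorem exists_incidences_le_of_card_lt {D : ℕ} (hp : CharAtLeast K p) (hD : D < p)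
    (hP : PairwiseSkew P) (hQ : PairwiseSkew Q) (hk : TransversalsLE Q k)
    (hQD : 6 * #Q < (D + 2) * (D + 3)) :
    ∃ P' ⊆ P, #P' ≤ 3 * D ^ 2 ∧
      incidences P Q ≤ D * #Q + (2 * D + k) * #P + incidences P' Q := by
  classical
  obtain ⟨F, hF, hFD, hQF⟩ := exists_totalDegree_le_forall_restrictY_eq_zero hQD
  obtain ⟨P', hP', hcard, hon⟩ := exists_incidences_le_of_restrictX_eq_zero hp hF (by lia)
    (hP.mono (filter_subset (fun ℓ => ℓ.restrictX F = 0) P)) hQ hk fun ℓ hℓ => (mem_filter.1 hℓ).2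
  refine ⟨P', hP'.trans (filter_subset _ _), hcard.trans (by gcongr), ?_⟩
  have hoff := incidences_le_totalDegree_mul_card_left hQ
    (fun ℓ (hℓ : ℓ ∈ {ℓ ∈ P | ¬ℓ.restrictX F = 0}) => (mem_filter.1 hℓ).2) hQF
  rw [← incidences_filter_add_incidences_filter_not P Q fun ℓ => ℓ.restrictX F = 0]
  calc _ ≤ F.totalDegree * #Q + (F.totalDegree + k) * #P + incidences P' Q +
          F.totalDegree * #P :=
        add_le_add (hon.trans (by gcongr; exact filter_subset _ _))
          (hoff.trans (by gcongr; exact filter_subset _ _))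
    _ ≤ D * #Q + (D + k) * #P + incidences P' Q + D * #P := by gcongr
    _ = D * #Q + (2 * D + k) * #P + incidences P' Q := by ring

theorem incidences_le_mul_two_pow {D : ℕ} (hp : CharAtLeast K p) (hD : D < p) (hkD : k ≤ D)
    (n : ℕ) (hn : 6 * 2 ^ n < (D + 1) ^ 2) (hP : PairwiseSkew P) (hQ : PairwiseSkew Q)
    (hk : TransversalsLE Q k) (hPcard : #P ≤ 18 * 2 ^ n) (hQcard : #Q ≤ 2 ^ n) :
    incidences P Q ≤ 109 * (n + 1) * 2 ^ n * D := by
  induction n generalizing P Q with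
  | zero =>
    have hD2 : 2 ≤ D := by nlinarith
    have := (incidences_le_card_mul_card P Q).trans (Nat.mul_le_mul hQcard hPcard)
    lia
  | succ n ih =>
    have hn' : 6 * 2 ^ n < (D + 1) ^ 2 := by rw [pow_succ] at hn; lia
    have hsqrt_le : Nat.sqrt (6 * 2 ^ n) ≤ D := Nat.le_of_lt_succ (Nat.sqrt_lt'.2 hn')
    have hhalf (Q') (hQ'Q : Q' ⊆ Q) (hQ' : #Q' ≤ 2 ^ n) :
        incidences Q' P ≤ 109 * (n + 2) * 2 ^ n * D := by
      have hsqrt := Nat.lt_succ_sqrt (6 * 2 ^ n)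
      obtain ⟨P', hP', hcard, hI⟩ := exists_incidences_le_of_card_lt hp (hsqrt_le.trans_lt hD) hP
        (hQ.mono hQ'Q) (hk.mono hQ'Q) (by lia)
      have hP'card : #P' ≤ 18 * 2 ^ n := by
        have := Nat.sqrt_le' (6 * 2 ^ n)
        lia
      rw [incidences_comm]
      calc incidences P Q'
          ≤ D * 2 ^ n + (2 * D + D) * (18 * 2 ^ (n + 1)) + 109 * (n + 1) * 2 ^ n * D := by
            refine hI.trans (add_le_add (by gcongr) ?_)
            exact ih hn' (hP.mono hP') (hQ.mono hQ'Q) (hk.mono hQ'Q) hP'card hQ'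
        _ = 109 * (n + 2) * 2 ^ n * D := by ring
    rw [incidences_comm]
    refine (incidences_le_two_mul (by rwa [← pow_succ']) hhalf).trans_eq ?_
    ring

theorem incidences_le_mul_sqrt (hp : CharAtLeast K p) {n : ℕ} (hn : 6 * 2 ^ n < p ^ 2)
    (hP : PairwiseSkew P) (hQ : PairwiseSkew Q) (hk : TransversalsLE Q k) (hkn : k ^ 2 ≤ 6 * 2 ^ n)
    (hPcard : #P ≤ 2 ^ n) (hQcard : #Q ≤ 2 ^ n) :
    incidences P Q ≤ 109 * (n + 1) * 2 ^ n * Nat.sqrt (6 * 2 ^ n) :=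
  incidences_le_mul_two_pow hp (Nat.sqrt_lt'.2 hn) (Nat.le_sqrt'.2 hkn) n (Nat.lt_succ_sqrt' _)
    hP hQ hk (by lia) hQcard

theorem mul_incidences_le_mul_four_pow (hp : CharAtLeast K p) (hkp : k < p) (n : ℕ)
    (hn : p ^ 2 ≤ 12 * 2 ^ n) (hP : PairwiseSkew P) (hQ : PairwiseSkew Q)
    (hk : TransversalsLE Q k) (hPcard : #P ≤ 2 ^ n) (hQcard : #Q ≤ 2 ^ n) :
    p * incidences P Q ≤ 1308 * (n + 1) * 4 ^ n := by
  induction n generalizing P Q with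
  | zero =>
    have := (incidences_le_card_mul_card P Q).trans (Nat.mul_le_mul hQcard hPcard)
    nlinarith
  | succ n ih =>
    rcases lt_or_ge (6 * 2 ^ (n + 1)) (p ^ 2) with hsmall | hlarge
    · have hI := incidences_le_mul_two_pow (D := p - 1) hp (by lia) (by lia) (n + 1)
        (by rwa [Nat.sub_add_cancel (by lia)]) hP hQ hk (by lia) hQcard
      calc p * incidences P Q ≤ p * (109 * (n + 1 + 1) * 2 ^ (n + 1) * p) := by
            gcongr
            exact hI.trans (Nat.mul_le_mul_left _ (Nat.sub_le p 1))
        _ = 109 * (n + 1 + 1) * 2 ^ (n + 1) * p ^ 2 := by ring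
        _ ≤ 109 * (n + 1 + 1) * 2 ^ (n + 1) * (12 * 2 ^ (n + 1)) := by gcongr
        _ = 1308 * (n + 1 + 1) * (2 * 2) ^ (n + 1) := by rw [mul_pow]; ring
    · have hp0 : 0 < p := by lia
      have hquarter := incidences_le_four_mul (P := P) (Q := Q) (a := 2 ^ n)
        (B := 1308 * (n + 1) * 4 ^ n / p) (by lia) (by lia) fun P' hP' Q' hQ' hP'card hQ'card =>
          (Nat.le_div_iff_mul_le hp0).2 <| (mul_comm _ _).trans_le <|
            ih (by lia) (hP.mono hP') (hQ.mono hQ') (hk.mono hQ') hP'card hQ'card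
      calc p * incidences P Q ≤ 4 * (p * (1308 * (n + 1) * 4 ^ n / p)) := by
            rw [mul_left_comm]
            gcongr
        _ ≤ 4 * (1308 * (n + 1) * 4 ^ n) := Nat.mul_le_mul_left _ (Nat.mul_div_le _ _)
        _ ≤ 1308 * (n + 1 + 1) * 4 ^ (n + 1) := by rw [pow_succ]; lia

end Surface

end GraphLine

/-! ### Lines encoding sums and products -/

namespace GraphLine

section Transversals

variable {K : Type*} [CommRing K] {a b : GraphLine K}

theorem Meets.slope_mul_sub {m : GraphLine K} (ha : a.Meets m) (hb : b.Meets m) :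
    m.slope * (a.base - b.base) =
      (a.slope - b.slope) * m.base + (a.intercept - b.intercept) := by
  simp only [Meets, height] at ha hb
  linear_combination hb - ha

theorem Meets.eq_of_base_eq_of_slope_eq {m m' : GraphLine K} (hm : a.Meets m) (hm' : a.Meets m')
    (hbase : m.base = m'.base) (hslope : m.slope = m'.slope) : m = m' := by
  simp only [Meets, height] at hm hm'
  refine GraphLine.ext hbase hslope ?_
  linear_combination hm' - hm - a.base * hslope + a.slope * hbase

variable [IsDomain K]

theorem injOn_base_setOf_meets_and_meets (h : a.base ≠ b.base) :
    Set.InjOn base {m : GraphLine K | a.Meets m ∧ b.Meets m} := by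
  rintro m ⟨ha, hb⟩ m' ⟨ha', hb'⟩ hbase
  refine ha.eq_of_base_eq_of_slope_eq ha' hbase (mul_right_cancel₀ (sub_ne_zero.2 h) ?_)
  rw [ha.slope_mul_sub hb, ha'.slope_mul_sub hb', hbase]

theorem injOn_slope_setOf_meets_and_meets (h : a.slope ≠ b.slope) :
    Set.InjOn slope {m : GraphLine K | a.Meets m ∧ b.Meets m} := by
  rintro m ⟨ha, hb⟩ m' ⟨ha', hb'⟩ hslope
  refine ha.eq_of_base_eq_of_slope_eq ha' (mul_left_cancel₀ (sub_ne_zero.2 h) ?_) hslope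
  have := ha.slope_mul_sub hb
  rw [hslope, ha'.slope_mul_sub hb'] at this
  exact (add_right_cancel this).symm

end Transversals

end GraphLine

section SumProductLines

open GraphLine
open scoped Pointwise

variable {k K : Type*} [Field k] [Field K] [Algebra k K] {θ : K}

theorem eq_and_eq_of_algebraMap_add_mul_algebraMap_eq (hθ : θ ∉ Set.range (algebraMap k K))
    {b s b' s' : k}
    (h : algebraMap k K b + θ * algebraMap k K s = algebraMap k K b' + θ * algebraMap k K s') :
    b = b' ∧ s = s' := by
  have hs : s = s' := by
    by_contra hne
    have hsub : algebraMap k K (s - s') ≠ 0 := by simpa [sub_eq_zero] using hne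
    refine hθ ⟨(b' - b) / (s - s'), ?_⟩
    rw [map_div₀, div_eq_iff hsub, map_sub, map_sub]
    linear_combination -h
  subst hs
  exact ⟨(algebraMap k K).injective (add_right_cancel h), rfl⟩

/-- A line such that the X-line with parameters `(x + e', b, e)` meets the Y-line with parameters
`(x' + e, b', e')` when `b * x' = b' * x`. The element `θ` of the extension field is there to
recover both `b` and `s` from the base. -/
def sumProductLine (θ : K) (s b e : k) : GraphLine K where
  base := algebraMap k K b + θ * algebraMap k K s
  slope := algebraMap k K s
  intercept := algebraMap k K (e * b)

theorem meets_sumProductLine (θ : K) {x x' b b' : k} (e e' : k) (h : b * x' = b' * x) :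
    (sumProductLine θ (x + e') b e).Meets (sumProductLine θ (x' + e) b' e') := by
  have h' := congrArg (algebraMap k K) h
  simp only [Meets, height, sumProductLine, map_mul, map_add] at h' ⊢
  linear_combination -h'

theorem eq_of_sumProductLine_eq (hθ : θ ∉ Set.range (algebraMap k K)) {s b e s' b' e' : k}
    (hb : b ≠ 0) (h : sumProductLine θ s b e = sumProductLine θ s' b' e') :
    s = s' ∧ b = b' ∧ e = e' := by
  obtain ⟨rfl, rfl⟩ := eq_and_eq_of_algebraMap_add_mul_algebraMap_eq hθ (congrArg base h)
  have he := (algebraMap k K).injective (congrArg intercept h)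
  exact ⟨rfl, rfl, mul_right_cancel₀ hb he⟩

variable [DecidableEq k] [DecidableEq K]

/-- The family of lines whose incidences encode the multiplicative energy of `A`. -/
def sumProductLines (θ : K) (A : Finset k) : Finset (GraphLine K) :=
  ((A + A) ×ˢ A ×ˢ A).image fun z => sumProductLine θ z.1 z.2.1 z.2.2

theorem mem_sumProductLines {A : Finset k} {m : GraphLine K} :
    m ∈ sumProductLines θ A ↔ ∃ s ∈ A + A, ∃ b ∈ A, ∃ e ∈ A, sumProductLine θ s b e = m := by
  simp only [sumProductLines, mem_image, mem_product, Prod.exists]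
  grind

theorem card_sumProductLines_le (θ : K) (A : Finset k) :
    #(sumProductLines θ A) ≤ #A ^ 2 * #(A + A) := by
  refine card_image_le.trans_eq ?_
  rw [card_product, card_product]
  ring

theorem pairwiseSkew_sumProductLines (hθ : θ ∉ Set.range (algebraMap k K)) (A : Finset k) :
    PairwiseSkew (sumProductLines θ A) := by
  intro t m hm m' hm' h
  obtain ⟨s, -, b, -, e, -, rfl⟩ := mem_sumProductLines.1 hm
  obtain ⟨s', -, b', -, e', -, rfl⟩ := mem_sumProductLines.1 hm'
  obtain ⟨hbase, hheight⟩ := Prod.mk.inj h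
  obtain ⟨rfl, rfl⟩ := eq_and_eq_of_algebraMap_add_mul_algebraMap_eq hθ hbase
  exact GraphLine.ext rfl rfl (add_left_cancel hheight)

theorem transversalsLE_sumProductLines (θ : K) (A : Finset k) :
    TransversalsLE (sumProductLines θ A) #(A + A) := by
  intro a b hab
  have hsub : ((sumProductLines θ A).filter fun m => a.Meets m ∧ b.Meets m : Set (GraphLine K)) ⊆
      {m | a.Meets m ∧ b.Meets m} := fun m hm => (mem_filter.1 hm).2
  by_cases hslope : a.slope = b.slope
  · let c := (a.intercept - b.intercept) / (a.base - b.base)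
    have hA : #A ≤ #(A + A) := card_le_card_add_self
    refine le_trans ?_ ((card_image_le (s := A) (f := fun x => algebraMap k K x + θ * c)).trans hA)
    refine card_le_card_of_injOn base (fun m hm => ?_)
      ((injOn_base_setOf_meets_and_meets hab).mono hsub)
    obtain ⟨hmT, ham, hbm⟩ := mem_filter.1 hm
    have hmslope : m.slope = c := by
      rw [eq_div_iff (sub_ne_zero.2 hab), ham.slope_mul_sub hbm, hslope, sub_self, zero_mul,
        zero_add]
    obtain ⟨s, -, x, hx, e, -, rfl⟩ := mem_sumProductLines.1 hmT
    exact mem_coe.2 (mem_image.2 ⟨x, hx, by rw [← hmslope]; rfl⟩)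
  · refine le_trans ?_ (card_image_le (s := A + A) (f := algebraMap k K))
    refine card_le_card_of_injOn slope (fun m hm => ?_)
      ((injOn_slope_setOf_meets_and_meets hslope).mono hsub)
    obtain ⟨s, hs, x, -, e, -, rfl⟩ := mem_sumProductLines.1 (mem_filter.1 hm).1
    exact mem_coe.2 (mem_image_of_mem _ hs)

theorem card_sq_mul_mulEnergy_le_incidences (hθ : θ ∉ Set.range (algebraMap k K)) {A : Finset k}
    (hA : 0 ∉ A) :
    #A ^ 2 * mulEnergy A A ≤ incidences (sumProductLines θ A) (sumProductLines θ A) := by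
  calc #A ^ 2 * mulEnergy A A
      = #({x ∈ (A ×ˢ A) ×ˢ A ×ˢ A | x.1.1 * x.2.1 = x.1.2 * x.2.2} ×ˢ A ×ˢ A) := by
        rw [card_product, card_product, mulEnergy]
        ring
    _ ≤ #((sumProductLines θ A).sigma fun ℓ => {m ∈ sumProductLines θ A | ℓ.Meets m}) := ?_
    _ = incidences (sumProductLines θ A) (sumProductLines θ A) := card_sigma _ _
  refine card_le_card_of_injOn (fun z => ⟨sumProductLine θ (z.1.2.2 + z.2.2) z.1.1.1 z.2.1,
    sumProductLine θ (z.1.2.1 + z.2.1) z.1.1.2 z.2.2⟩) ?_ ?_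
  · rintro ⟨⟨⟨b, b'⟩, x', x⟩, e, e'⟩ hz
    simp only [coe_product, coe_filter, mem_product, Set.mem_prod, Set.mem_ofPred_eq, mem_coe] at hz
    obtain ⟨⟨⟨⟨hb, hb'⟩, hx', hx⟩, heq⟩, he, he'⟩ := hz
    refine mem_coe.2 (mem_sigma.2 ⟨?_, mem_filter.2 ⟨?_, meets_sumProductLine θ e e' heq⟩⟩)
    · exact mem_sumProductLines.2 ⟨_, add_mem_add hx he', b, hb, e, he, rfl⟩
    · exact mem_sumProductLines.2 ⟨_, add_mem_add hx' he, b', hb', e', he', rfl⟩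
  · rintro ⟨⟨⟨b, b'⟩, x', x⟩, e, e'⟩ hz ⟨⟨⟨c, c'⟩, y', y⟩, f, f'⟩ - h
    simp only [coe_product, coe_filter, mem_product, Set.mem_prod, Set.mem_ofPred_eq, mem_coe] at hz
    simp only [Sigma.mk.injEq, heq_eq_eq] at h
    obtain ⟨hs, rfl, rfl⟩ := eq_of_sumProductLine_eq hθ (ne_of_mem_of_not_mem hz.1.1.1.1 hA) h.1
    obtain ⟨hs', rfl, rfl⟩ := eq_of_sumProductLine_eq hθ (ne_of_mem_of_not_mem hz.1.1.1.2 hA) h.2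
    rw [add_right_cancel hs, add_right_cancel hs']

theorem card_pow_six_le_card_mul_incidences (hθ : θ ∉ Set.range (algebraMap k K)) {A : Finset k}
    (hA : 0 ∉ A) :
    #A ^ 6 ≤ #(A * A) * incidences (sumProductLines θ A) (sumProductLines θ A) :=
  calc #A ^ 6 = #A ^ 2 * (#A ^ 2 * #A ^ 2) := by ring
    _ ≤ #A ^ 2 * (#(A * A) * mulEnergy A A) :=
      Nat.mul_le_mul_left _ (le_card_mul_mul_mulEnergy A A)
    _ = #(A * A) * (#A ^ 2 * mulEnergy A A) := by ring
    _ ≤ #(A * A) * incidences (sumProductLines θ A) (sumProductLines θ A) :=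
      Nat.mul_le_mul_left _ (card_sq_mul_mulEnergy_le_incidences hθ hA)

end SumProductLines

section FiniteBounds

open GraphLine
open scoped Pointwise

variable {k : Type*} [Field k] [DecidableEq k] {p n : ℕ} {A : Finset k}

theorem ratFunc_X_notMem_range_algebraMap (k : Type*) [Field k] :
    (RatFunc.X : RatFunc k) ∉ Set.range (algebraMap k (RatFunc k)) := by
  rintro ⟨c, hc⟩
  exact RatFunc.transcendental_X (hc ▸ isAlgebraic_algebraMap c)

theorem infinite_ratFunc (k : Type*) [Field k] : Infinite (RatFunc k) :=
  Infinite.of_injective _ (RatFunc.algebraMap_injective k)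

theorem card_pow_six_le_card_mul_mul_sqrt (hp : CharAtLeast k p) (hA : 0 ∉ A)
    (hn : #A ^ 2 * #(A + A) ≤ 2 ^ n) (hnp : 6 * 2 ^ n < p ^ 2) :
    #A ^ 6 ≤ #(A * A) * (109 * (n + 1) * 2 ^ n * Nat.sqrt (6 * 2 ^ n)) := by
  classical
  have := infinite_ratFunc k
  have hθ := ratFunc_X_notMem_range_algebraMap k
  have hcard := (card_sumProductLines_le (RatFunc.X : RatFunc k) A).trans hn
  have hskew := pairwiseSkew_sumProductLines hθ A
  have hsum : #(A + A) ^ 2 ≤ 6 * 2 ^ n := by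
    nlinarith [card_add_le (s := A) (t := A)]
  refine (card_pow_six_le_card_mul_incidences hθ hA).trans (Nat.mul_le_mul_left _ ?_)
  exact incidences_le_mul_sqrt (hp.of_injective (algebraMap k (RatFunc k)).injective) hnp hskew
    hskew (transversalsLE_sumProductLines _ A) hsum hcard hcard

theorem mul_card_pow_six_le_card_mul_mul_four_pow (hp : CharAtLeast k p) (hA : 0 ∉ A)
    (hn : #A ^ 2 * #(A + A) ≤ 2 ^ n) (hpn : p ^ 2 ≤ 6 * 2 ^ n) (hsum : #(A + A) < p) :
    p * #A ^ 6 ≤ #(A * A) * (1308 * (n + 1) * 4 ^ n) := by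
  classical
  have := infinite_ratFunc k
  have hθ := ratFunc_X_notMem_range_algebraMap k
  have hcard := (card_sumProductLines_le (RatFunc.X : RatFunc k) A).trans hn
  have hskew := pairwiseSkew_sumProductLines hθ A
  have hI := mul_incidences_le_mul_four_pow (hp.of_injective (algebraMap k (RatFunc k)).injective)
    hsum n (by lia) hskew hskew (transversalsLE_sumProductLines _ A) hcard hcard
  calc p * #A ^ 6 ≤ p * (#(A * A) * incidences (sumProductLines RatFunc.X A) _) :=
        Nat.mul_le_mul_left _ (card_pow_six_le_card_mul_incidences hθ hA)
    _ = #(A * A) * (p * incidences (sumProductLines RatFunc.X A) _) := mul_left_comm _ _ _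
    _ ≤ #(A * A) * (1308 * (n + 1) * 4 ^ n) := Nat.mul_le_mul_left _ hI

end FiniteBounds

/-! ### The sum-product theorem -/

theorem exists_le_two_pow_le_two_mul {N : ℕ} (hN : 1 ≤ N) : ∃ n, N ≤ 2 ^ n ∧ 2 ^ n ≤ 2 * N := by
  obtain ⟨n, hle, hlt⟩ := exists_nat_pow_near hN one_lt_two
  exact ⟨n + 1, hlt.le, by rw [pow_succ']; exact Nat.mul_le_mul_left 2 hle⟩

theorem add_one_le_six_mul_logb_two {n N : ℕ} (hN : 2 ≤ N) (hn : 2 ^ n ≤ 2 * N ^ 4) :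
    (n : ℝ) + 1 ≤ 6 * Real.logb 2 N := by
  have hpow : n ≤ Real.logb 2 (2 ^ 1 * (N : ℝ) ^ 4) := by
    rw [Real.le_logb_iff_rpow_le one_lt_two (by positivity), Real.rpow_natCast]
    exact_mod_cast hn
  rw [Real.logb_mul (by positivity) (by positivity), Real.logb_pow, Real.logb_pow,
    Real.logb_self_eq_one one_lt_two] at hpow
  have hlog : 1 ≤ Real.logb 2 N := by
    rw [Real.le_logb_iff_rpow_le one_lt_two (by positivity), Real.rpow_one]
    exact_mod_cast hN
  push_cast at hpow
  linarith

section SumProduct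

open scoped Pointwise

variable {k : Type*} [Field k] [DecidableEq k] {p n : ℕ} {A : Finset k} {r : ℝ}

theorem pow_six_le_mul_card_mul (hp : CharAtLeast k p) (hA : 0 ∉ A)
    (hn : #A ^ 2 * #(A + A) ≤ 2 ^ n) (hnp : 6 * 2 ^ n < p ^ 2) (hr : 0 < r)
    (hrA : r ^ 5 ≤ 2 * #A) (hnr : 2 ^ n ≤ r ^ 16) :
    r ^ 6 ≤ 17440 * ((n : ℝ) + 1) * #(A * A) := by
  have hsqrt : (Nat.sqrt (6 * 2 ^ n) : ℝ) ≤ 5 / 2 * r ^ 8 := by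
    refine le_of_sq_le_sq ?_ (by positivity)
    have hsq : (Nat.sqrt (6 * 2 ^ n) : ℝ) ^ 2 ≤ 6 * 2 ^ n := mod_cast Nat.sqrt_le' _
    calc (Nat.sqrt (6 * 2 ^ n) : ℝ) ^ 2 ≤ 25 / 4 * r ^ 16 := by
          linarith [pow_pos hr 16]
      _ = (5 / 2 * r ^ 8) ^ 2 := by ring
  have hcard : (#A : ℝ) ^ 6 ≤ #(A * A) * (109 * (n + 1) * 2 ^ n * Nat.sqrt (6 * 2 ^ n)) :=
    mod_cast card_pow_six_le_card_mul_mul_sqrt hp hA hn hnp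
  refine le_of_mul_le_mul_right ?_ (pow_pos hr 24)
  calc r ^ 6 * r ^ 24 = (r ^ 5) ^ 6 := by ring
    _ ≤ (2 * (#A : ℝ)) ^ 6 := by gcongr
    _ = 64 * (#A : ℝ) ^ 6 := by ring
    _ ≤ 64 * (#(A * A) * (109 * (n + 1) * r ^ 16 * (5 / 2 * r ^ 8))) := by
      gcongr 64 * ?_
      exact hcard.trans (by gcongr)
    _ = 17440 * ((n : ℝ) + 1) * #(A * A) * r ^ 24 := by ring

theorem char_le_mul_card_mul_mul_sq (hp : CharAtLeast k p) (hA : 0 ∉ A)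
    (hn : #A ^ 2 * #(A + A) ≤ 2 ^ n) (hpn : p ^ 2 ≤ 6 * 2 ^ n) (hsum : #(A + A) < p) (hr : 0 < r)
    (hrA : r ^ 5 ≤ 2 * #A) (hnr : 2 ^ n ≤ r ^ 16) :
    (p : ℝ) ≤ 83712 * ((n : ℝ) + 1) * #(A * A) * r ^ 2 := by
  have hcard : p * (#A : ℝ) ^ 6 ≤ #(A * A) * (1308 * (n + 1) * 4 ^ n) :=
    mod_cast mul_card_pow_six_le_card_mul_mul_four_pow hp hA hn hpn hsum
  have hfour : (4 : ℝ) ^ n ≤ r ^ 32 :=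
    calc (4 : ℝ) ^ n = (2 ^ n) ^ 2 := by rw [← pow_mul, mul_comm, pow_mul]; norm_num
      _ ≤ (r ^ 16) ^ 2 := by gcongr
      _ = r ^ 32 := by ring
  refine le_of_mul_le_mul_right ?_ (pow_pos hr 30)
  calc p * r ^ 30 = p * (r ^ 5) ^ 6 := by ring
    _ ≤ p * (2 * (#A : ℝ)) ^ 6 := by gcongr
    _ = 64 * (p * (#A : ℝ) ^ 6) := by ring
    _ ≤ 64 * (#(A * A) * (1308 * (n + 1) * r ^ 32)) := by
      gcongr 64 * ?_
      exact hcard.trans (by gcongr)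
    _ = 83712 * ((n : ℝ) + 1) * #(A * A) * r ^ 2 * r ^ 30 := by ring

theorem min_le_mul_card_mul (hp : CharAtLeast k p) (hA : 0 ∉ A)
    (hn : #A ^ 2 * #(A + A) ≤ 2 ^ n) (hsum : #(A + A) < p) (hr : 0 < r)
    (hrA : r ^ 5 ≤ 2 * #A) (hnr : 2 ^ n ≤ r ^ 16) :
    min (p * (r ^ 2)⁻¹) (r ^ 6) ≤ 83712 * ((n : ℝ) + 1) * #(A * A) := by
  rcases lt_or_ge (6 * 2 ^ n) (p ^ 2) with hnp | hpn
  · refine (min_le_right _ _).trans <|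
      (pow_six_le_mul_card_mul hp hA hn hnp hr hrA hnr).trans ?_
    gcongr
    norm_num
  · refine (min_le_left _ _).trans ?_
    rw [← div_eq_mul_inv, div_le_iff₀ (by positivity)]
    exact char_le_mul_card_mul_mul_sq hp hA hn hpn hsum hr hrA hnr

theorem min_le_mul_logb_mul_card_mul (hp : CharAtLeast k p) (hA : 2 ≤ #A) (hr : 0 < r)
    (hrA : r ^ 5 = #A) (hsum : (#(A + A) : ℝ) < 1 / 5 * r ^ 6) (hsump : #(A + A) < p) :
    min (p * (r ^ 2)⁻¹) (r ^ 6) ≤ 502272 * Real.logb 2 #A * #(A * A) := by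
  set B := A.erase 0
  have hBA : B ⊆ A := erase_subset 0 A
  have hcard : #B ≤ #A := card_le_card hBA
  have hAB : #A - 1 ≤ #B := pred_card_le_card_erase
  have hsumB : #(B + B) ≤ #(A + A) := card_le_card (add_subset_add hBA hBA)
  have hB : B.Nonempty := card_pos.1 (by lia)
  obtain ⟨n, hn, hn'⟩ : ∃ n, #B ^ 2 * #(B + B) ≤ 2 ^ n ∧ 2 ^ n ≤ 2 * (#B ^ 2 * #(B + B)) :=
    exists_le_two_pow_le_two_mul <| Nat.mul_pos (pow_pos hB.card_pos 2) (hB.add hB).card_pos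
  have hnr : (2 : ℝ) ^ n ≤ r ^ 16 :=
    calc (2 : ℝ) ^ n ≤ 2 * (#B ^ 2 * #(B + B)) := mod_cast hn'
      _ ≤ 2 * (#A ^ 2 * #(A + A)) := by gcongr
      _ ≤ 2 * ((r ^ 5) ^ 2 * (1 / 5 * r ^ 6)) := by rw [hrA]; gcongr
      _ ≤ r ^ 16 := by linarith [pow_pos hr 16]
  have hnA : 2 ^ n ≤ 2 * #A ^ 4 :=
    calc 2 ^ n ≤ 2 * (#B ^ 2 * #(B + B)) := hn'
      _ ≤ 2 * (#A ^ 2 * (#A * #A)) := by gcongr; exact hsumB.trans card_add_le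
      _ = 2 * #A ^ 4 := by ring
  have hrB : r ^ 5 ≤ 2 * (#B : ℝ) := by
    rw [hrA]
    exact_mod_cast (by lia : #A ≤ 2 * #B)
  calc min (p * (r ^ 2)⁻¹) (r ^ 6) ≤ 83712 * ((n : ℝ) + 1) * #(B * B) :=
        min_le_mul_card_mul hp (notMem_erase 0 A) hn (hsumB.trans_lt hsump) hr hrB hnr
    _ ≤ 83712 * ((n : ℝ) + 1) * #(A * A) := by gcongr
    _ ≤ 83712 * (6 * Real.logb 2 #A) * #(A * A) := by
      gcongr
      exact add_one_le_six_mul_logb_two hA hnA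
    _ = 502272 * Real.logb 2 #A * #(A * A) := by ring

theorem mul_inv_sq_le_card_mul (hr : 0 < r) (hrA : r ^ 5 = #A)
    (hsum : (#(A + A) : ℝ) < 1 / 5 * r ^ 6) (hsump : p ≤ #(A + A)) :
    p * (r ^ 2)⁻¹ ≤ #(A * A) := by
  have hA : (#A : ℝ) ≤ #(A * A) := mod_cast card_le_card_mul_self₀
  have hr1 : 1 ≤ r := by
    have : A.Nonempty := card_pos.1 (by exact_mod_cast hrA ▸ pow_pos hr 5)
    exact (one_le_pow_iff_of_nonneg hr.le (by norm_num : 5 ≠ 0)).1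
      (hrA ▸ mod_cast this.card_pos)
  refine le_trans ?_ hA
  rw [← div_eq_mul_inv, div_le_iff₀ (by positivity), ← hrA, ← pow_add]
  calc (p : ℝ) ≤ #(A + A) := mod_cast hsump
    _ ≤ r ^ 6 := by linarith [pow_pos hr 6]
    _ ≤ r ^ 7 := by gcongr; norm_num

theorem stmt13_general (hp : CharAtLeast k p) (hA : 2 ≤ #A) :
    1 / 5 * (#A : ℝ) ^ ((6 : ℝ) / 5) ≤ #(A + A) ∨
      1 / 502272 * min (p * (#A : ℝ) ^ (-(2 : ℝ) / 5)) ((#A : ℝ) ^ ((6 : ℝ) / 5)) *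
        Real.logb 2 #A ^ (-(1 : ℝ)) ≤ #(A * A) := by
  have hA0 : (0 : ℝ) < #A := by positivity
  set r : ℝ := (#A : ℝ) ^ ((1 : ℝ) / 5)
  have hr : 0 < r := by positivity
  have hrpow (m : ℕ) : r ^ m = (#A : ℝ) ^ ((m : ℝ) / 5) := by
    rw [← Real.rpow_natCast, ← Real.rpow_mul hA0.le, one_div_mul_eq_div]
  have hr5 : r ^ 5 = #A := by simp [hrpow]
  have hr6 : (#A : ℝ) ^ ((6 : ℝ) / 5) = r ^ 6 := by simp [hrpow]
  have hr2 : (#A : ℝ) ^ (-(2 : ℝ) / 5) = (r ^ 2)⁻¹ := by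
    simp [hrpow, neg_div, Real.rpow_neg hA0.le]
  have hlog : 1 ≤ Real.logb 2 #A := by
    rw [Real.le_logb_iff_rpow_le one_lt_two hA0, Real.rpow_one]
    exact_mod_cast hA
  rw [hr6, hr2, Real.rpow_neg_one, or_iff_not_imp_left, not_le]
  intro hsum
  rw [← div_eq_mul_inv, div_le_iff₀ (by positivity), one_div_mul_eq_div,
    div_le_iff₀' (by norm_num)]
  suffices min (p * (r ^ 2)⁻¹) (r ^ 6) ≤ 502272 * Real.logb 2 #A * #(A * A) by linarith
  rcases lt_or_ge #(A + A) p with hsump | hsump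
  · exact min_le_mul_logb_mul_card_mul hp hA hr hr5 hsum hsump
  · calc min (p * (r ^ 2)⁻¹) (r ^ 6) ≤ 1 * #(A * A) := by
          rw [one_mul]
          exact (min_le_left _ _).trans (mul_inv_sq_le_card_mul hr hr5 hsum hsump)
      _ ≤ 502272 * Real.logb 2 #A * #(A * A) := by gcongr; linarith

end SumProduct

theorem stmt13 :
    ∃ c : ℝ, 0 < c ∧ ∃ C : ℝ, 0 < C ∧
      ∀ (p : ℕ), p.Prime → Odd p →
        ∀ A : Finset (ZMod p), 2 ≤ A.card →
          (1 / 5 * min ((A.card : ℝ) ^ ((6 : ℝ) / 5)) ((p : ℝ) / 2) ≤ ((sumSet p A).card : ℝ)) ∨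
          (c * min ((p : ℝ) * (A.card : ℝ) ^ (-(2 : ℝ) / 5)) ((A.card : ℝ) ^ ((6 : ℝ) / 5)) *
              (Real.logb 2 A.card) ^ (-C) ≤ ((prodSet p A).card : ℝ)) := by
  refine ⟨1 / 502272, by norm_num, 1, one_pos, fun p hp _ A hA => ?_⟩
  have : Fact p.Prime := ⟨hp⟩
  exact (stmt13_general (charAtLeast_of_charP (ZMod p) p) hA).imp_left <|
    (mul_le_mul_of_nonneg_left (min_le_left _ _) (by norm_num)).trans
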